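/- (i) The exceptional set E has packing dimension zero; (ii) for every S ∈ Λ_e, the relative exceptional set E^S has box-counting dimension zero; (iii) the infinitely renormalizable set E_∞ has Hausdorff dimension zero. -/

import Mathlib

open Set Filter MeasureTheory Topology

noncomputable section

/-- The β-transformation `x ↦ βx - ⌊βx⌋`. -/
def Tbeta (β x : ℝ) : ℝ := Int.fract (β * x)

/-- The survivor set `K_β(t)`: points of `[0,1)` whose orbit never enters `[0,t)`. -/
def survivor (β t : ℝ) : Set ℝ :=
  {x | x ∈ Set.Ico (0 : ℝ) 1 ∧ ∀ n : ℕ, t ≤ (Tbeta β)^[n] x}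

/-- The set-valued bifurcation set `E_β`. -/
def Ebif (β : ℝ) : Set ℝ :=
  {t | t ∈ Set.Ico (0 : ℝ) 1 ∧ ∀ t' : ℝ, t < t' → survivor β t' ≠ survivor β t}

/-- `(c)_β = Σ_{i≥1} c_i β^{-i}` for an infinite digit sequence (indexed from `0`). -/
def valSeq (β : ℝ) (c : ℕ → ℕ) : ℝ := ∑' i : ℕ, (c i : ℝ) / β ^ (i + 1)

/-- `(w 0^∞)_β` for a finite word `w`. -/
def valWord (β : ℝ) (w : List ℕ) : ℝ :=
  ∑ i ∈ Finset.range w.length, (w.getD i 0 : ℝ) / β ^ (i + 1)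

/-- `w⁺`: increment the last letter of `w`. -/
def wplus (w : List ℕ) : List ℕ := w.dropLast ++ [w.getLast! + 1]

/-- `w⁻`: decrement the last letter of `w`. -/
def wminus (w : List ℕ) : List ℕ := w.dropLast ++ [w.getLast! - 1]

/-- `θ`: increment every digit of `w` by one. -/
def theta (w : List ℕ) : List ℕ := w.map (· + 1)

/-- `L(w)`: the lexicographically largest cyclic permutation of `w`. -/
def maxCyc (w : List ℕ) : List ℕ := ((List.range w.length).map w.rotate).foldl max []

/-- `w^∞`: the periodic sequence with period block `w`. -/
def perSeq (w : List ℕ) : ℕ → ℕ := fun i => w.getD (i % w.length) 0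

/-- The sequence given by the word `w` followed by the sequence `c`. -/
def wordSeq (w : List ℕ) (c : ℕ → ℕ) : ℕ → ℕ :=
  fun i => if i < w.length then w.getD i 0 else c (i - w.length)

/-- Strict lexicographic order `≺` on sequences. -/
def seqLt (x y : ℕ → ℕ) : Prop := ∃ n, (∀ i < n, x i = y i) ∧ x n < y n

/-- Lexicographic order `≼` on sequences. -/
def seqLe (x y : ℕ → ℕ) : Prop := x = y ∨ seqLt x y

/-- The `n`-fold left shift `σⁿ` on sequences. -/
def shiftn (n : ℕ) (x : ℕ → ℕ) : ℕ → ℕ := fun i => x (i + n)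

/-- One step of the Farey recursion: insert the concatenation `w_i w_{i+1}`
between consecutive entries. -/
def fareyInsert : List (List ℕ) → List (List ℕ)
  | [] => []
  | [w] => [w]
  | w :: v :: rest => w :: (w ++ v) :: fareyInsert (v :: rest)

/-- The ordered set `F_n` of Farey words of level `n`. -/
def fareyLevel : ℕ → List (List ℕ)
  | 0 => [[0], [1]]
  | n + 1 => fareyInsert (fareyLevel n)

/-- `F`: all Farey words of length at least two. -/
def FareySet : Set (List ℕ) := {w | (∃ n, w ∈ fareyLevel n) ∧ w ≠ [0] ∧ w ≠ [1]}

/-- `F̂ = F ∪ {1}`. -/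
def FareyHat : Set (List ℕ) := FareySet ∪ {[1]}

/-- The extended Farey set `F_e = {θ^k(w) : w ∈ F̂, k ≥ 0}`. -/
def FareyExt : Set (List ℕ) := {w | ∃ v ∈ FareyHat, ∃ k : ℕ, w = theta^[k] v}

/-- A nonempty word is Lyndon iff it is strictly smaller than each of its nontrivial
cyclic rotations (equivalently: aperiodic and lexicographically smallest among its
cyclic permutations). -/
def IsLyndon (w : List ℕ) : Prop := w ≠ [] ∧ ∀ i, 0 < i → i < w.length → w < w.rotate i

/-- `L_e`: all Lyndon words over `ℕ ∪ {0}` except the single-letter word `0`. -/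
def LyndonExt : Set (List ℕ) := {w | IsLyndon w ∧ w ≠ [0]}

/-- `L`: Lyndon words over `{0,1}` of length at least `2`. -/
def LyndonBin : Set (List ℕ) := {w | IsLyndon w ∧ 2 ≤ w.length ∧ ∀ d ∈ w, d ≤ 1}

/-- The block of `Φ_s` emitted for current digit `d` after previous digit `p`:
`L(s)` for `00`, `s⁻` for `10`, `L(s)⁺` for `01`, `s` for `11`. -/
def phiBlock (s : List ℕ) (p d : ℕ) : List ℕ :=
  if d = 0 then (if p = 0 then maxCyc s else wminus s)
  else (if p = 0 then wplus (maxCyc s) else s)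

def phiAux (s : List ℕ) : ℕ → List ℕ → List ℕ
  | _, [] => []
  | p, d :: rest => phiBlock s p d ++ phiAux s d rest

/-- The substitution `Φ_s` on finite words; `s • r = subst s r`.  An initial digit `0`
produces `s⁻`, an initial digit `1` produces `L(s)⁺`, and thereafter runs
`0^k` resp. `1^l` produce `L(s)^{k-1}` resp. `s^{l-1}`, in accordance with
`Φ_s(0^{k₁}1^{l₁}…) = s⁻ L(s)^{k₁-1} L(s)⁺ s^{l₁-1} …` and
`Φ_s(1^{k₁}0^{l₁}…) = L(s)⁺ s^{k₁-1} s⁻ L(s)^{l₁-1} …`. -/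
def subst (s r : List ℕ) : List ℕ :=
  match r with
  | [] => []
  | d :: rest => phiBlock s (1 - d) d ++ phiAux s d rest

/-- The substitution `Φ_s` on infinite sequences, as the limit of its values
on initial segments (each digit contributes a nonempty block, so the `i`-th letter
is determined by the first `i+1` digits). -/
def phiSeq (s : List ℕ) (c : ℕ → ℕ) : ℕ → ℕ :=
  fun i => (subst s (List.ofFn fun j : Fin (i + 1) => c j)).getD i 0

/-- `Λ_e(m) = {s₁ • s₂ • … • s_m : s₁ ∈ F_e, s₂,…,s_m ∈ F}`. -/
def LambdaE (m : ℕ) : Set (List ℕ) :=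
  {w | ∃ s₁ ∈ FareyExt, ∃ rs : List (List ℕ),
    rs.length = m - 1 ∧ (∀ r ∈ rs, r ∈ FareySet) ∧ w = rs.foldl subst s₁}

/-- `Λ_e = ∪_{m≥1} Λ_e(m)`. -/
def LambdaExt : Set (List ℕ) := ⋃ m ∈ Set.Ici 1, LambdaE m

/-- `β_ℓ^S`: the base `β > 1` with `(L(S)^∞)_β = 1` (it is unique since
`β ↦ (c)_β` is strictly decreasing). -/
def betaL (S : List ℕ) : ℝ :=
  Classical.epsilon fun β : ℝ => 1 < β ∧ valSeq β (perSeq (maxCyc S)) = 1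

/-- `β_*^S`: the base `β > 1` with `(L(S)⁺ S⁻ L(S)^∞)_β = 1`. -/
def betaStar (S : List ℕ) : ℝ :=
  Classical.epsilon fun β : ℝ =>
    1 < β ∧ valSeq β (wordSeq (wplus (maxCyc S) ++ wminus S) (perSeq (maxCyc S))) = 1

/-- `β_r^S`: the base `β > 1` with `(L(S)⁺ S^∞)_β = 1`. -/
def betaR (S : List ℕ) : ℝ :=
  Classical.epsilon fun β : ℝ => 1 < β ∧ valSeq β (wordSeq (wplus (maxCyc S)) (perSeq S)) = 1

/-- The Lyndon/Farey interval `J^S = [β_ℓ^S, β_r^S]`. -/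
def Jint (S : List ℕ) : Set ℝ := Set.Icc (betaL S) (betaR S)

/-- The basic interval `I^S = [β_ℓ^S, β_*^S]`. -/
def Iint (S : List ℕ) : Set ℝ := Set.Icc (betaL S) (betaStar S)

/-- The exceptional set `E = (1,∞) ∖ ∪_{s ∈ F_e} J^s`. -/
def Eexc : Set ℝ := Set.Ioi 1 \ ⋃ s ∈ FareyExt, Jint s

/-- The relative exceptional set `E^S = (J^S ∖ I^S) ∖ ∪_{r ∈ F} J^{S•r}`. -/
def EexcRel (S : List ℕ) : Set ℝ :=
  (Jint S \ Iint S) \ ⋃ r ∈ FareySet, Jint (subst S r)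

/-- The infinitely renormalizable set `E_∞ = ∩_{m≥1} ∪_{S ∈ Λ_e(m)} J^S`. -/
def Einf : Set ℝ := ⋂ m ∈ Set.Ici 1, ⋃ S ∈ LambdaE m, Jint S

/-- `E_L = E ∪ {β_ℓ^s : s ∈ F_e}`. -/
def EL : Set ℝ := Eexc ∪ {x | ∃ s ∈ FareyExt, x = betaL s}

/-- The critical value `τ(β) = min{t > 0 : dim_H K_β(t) = 0}`. -/
def tau (β : ℝ) : ℝ := sInf {t : ℝ | 0 < t ∧ dimH (survivor β t) = 0}

end

noncomputable section

/-- The least number of `ε`-balls needed to cover `E` (as a value in `ENNReal`). -/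
def coverNum (E : Set ℝ) (ε : ℝ) : ENNReal :=
  sInf {n : ENNReal | ∃ F : Finset ℝ, (F.card : ENNReal) = n ∧ E ⊆ ⋃ x ∈ F, Metric.ball x ε}

/-- The (upper, hence also lower) box-counting dimension of `E` is zero: for every
`s > 0`, eventually as `ε → 0⁺` the covering number is at most `ε^{-s}`. -/
def HasBoxDimZero (E : Set ℝ) : Prop :=
  ∀ s : ℝ, 0 < s → ∀ᶠ ε in 𝓝[>] (0 : ℝ), coverNum E ε ≤ ENNReal.ofReal (ε ^ (-s))

/-- The packing dimension of `E` is zero, via the standard characterization of packing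
(= modified upper box) dimension: `E` admits a countable cover by sets of upper
box-counting dimension zero. -/
def HasPackingDimZero (E : Set ℝ) : Prop :=
  ∃ C : ℕ → Set ℝ, E ⊆ ⋃ n, C n ∧ ∀ n, HasBoxDimZero (C n)

end

noncomputable section

/-- The value `Σ_i c_i β^{-(i+1)}` of an integer digit sequence in base `β`. -/
def baseVal (β : ℝ) (c : ℕ → ℤ) : ℝ := ∑' i : ℕ, (c i : ℝ) / β ^ (i + 1)

lemma valSeq_eq_baseVal (β : ℝ) (c : ℕ → ℕ) (d : ℕ → ℤ) (h : ∀ i, (c i : ℤ) = d i) :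
    valSeq β c = baseVal β d := by
  unfold valSeq baseVal
  congr 1
  ext i
  rw [← h i]
  simp

lemma hasSum_const_div_pow {β D : ℝ} (hβ : 1 < β) :
    HasSum (fun i : ℕ => D / β ^ (i + 1)) (D / (β - 1)) := by
  have h := (hasSum_geometric_of_lt_one (r := β⁻¹) (by positivity)
    (inv_lt_one_of_one_lt₀ hβ)).mul_left (D / β)
  have hb : β - 1 ≠ 0 := by linarith
  have hb' : β ≠ 0 := by linarith
  have e1 : (fun i : ℕ => D / β ^ (i + 1)) = fun i => D / β * β⁻¹ ^ i := by
    ext i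
    rw [pow_succ, inv_pow]
    field_simp
  have e2 : D / (β - 1) = D / β * (1 - β⁻¹)⁻¹ := by
    rw [show 1 - β⁻¹ = (β - 1) / β by field_simp]
    field_simp
  rw [e1, e2]
  exact h

lemma summable_digits {β D : ℝ} (hβ : 1 < β) {c : ℕ → ℤ} (h0 : ∀ i, 0 ≤ c i)
    (hD : ∀ i, (c i : ℝ) ≤ D) : Summable fun i : ℕ => (c i : ℝ) / β ^ (i + 1) := by
  refine Summable.of_nonneg_of_le (fun i => ?_) (fun i => ?_)
    (hasSum_const_div_pow (D := D) hβ).summable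
  · have : (0 : ℝ) ≤ c i := by exact_mod_cast h0 i
    positivity
  · have := hD i
    gcongr

lemma baseVal_le {β D : ℝ} (hβ : 1 < β) {c : ℕ → ℤ} (h0 : ∀ i, 0 ≤ c i)
    (hD : ∀ i, (c i : ℝ) ≤ D) : baseVal β c ≤ D / (β - 1) := by
  rw [← (hasSum_const_div_pow hβ).tsum_eq]
  refine (summable_digits hβ h0 hD).tsum_le_tsum (fun i => ?_)
    (hasSum_const_div_pow hβ).summable
  have := hD i
  gcongr

lemma first_digit_le {β : ℝ} (hβ : 1 < β) {D : ℝ} {c : ℕ → ℤ} (h0 : ∀ i, 0 ≤ c i)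
    (hD : ∀ i, (c i : ℝ) ≤ D) (hv : baseVal β c = 1) : (c 0 : ℝ) ≤ β := by
  have h := (summable_digits hβ h0 hD).le_tsum 0 (fun i _ => by
    have : (0 : ℝ) ≤ c i := by exact_mod_cast h0 i
    positivity)
  have hb : 0 < β := by linarith
  change _ ≤ baseVal β c at h
  rw [hv, div_le_one (by positivity)] at h
  simpa using h

/-- Two bases in which sequences agreeing on `n` digits have value one are exponentially close. -/
lemma base_gap_le {x y δ D : ℝ} {n : ℕ} {c d : ℕ → ℤ} (hδ : 0 < δ) (hx : 1 ≤ x) (hy : 1 + δ ≤ y)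
    (hxy : x ≤ y) (hc0 : ∀ i, 0 ≤ c i) (hcD : ∀ i, (c i : ℝ) ≤ D) (hd0 : ∀ i, 0 ≤ d i)
    (hdD : ∀ i, (d i : ℝ) ≤ D) (hc1 : 1 ≤ c 0) (hagree : ∀ i < n, c i = d i)
    (hsx : Summable fun i : ℕ => (c i : ℝ) / x ^ (i + 1))
    (hvx : baseVal x c = 1) (hvy : baseVal y d = 1) :
    y - x ≤ (D + 1) ^ 2 * (D / δ) * ((1 + δ)⁻¹) ^ n := by
  have hy1 : 1 < y := by linarith
  have hD1 : (1 : ℝ) ≤ D := le_trans (by exact_mod_cast hc1) (hcD 0)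
  have hyD : y ≤ D + 1 := by
    have := baseVal_le hy1 hd0 hdD
    rw [hvy, le_div_iff₀ (by linarith)] at this
    linarith
  have hsy := summable_digits hy1 hc0 hcD
  have hsd := summable_digits hy1 hd0 hdD
  have htail : HasSum (fun i : ℕ => D / y ^ (i + n + 1)) (D / (y - 1) * (y⁻¹) ^ n) := by
    have e : (fun i : ℕ => D / y ^ (i + n + 1)) = fun i => D / y ^ (i + 1) * (y⁻¹) ^ n := by
      ext i
      rw [inv_pow, show i + n + 1 = (i + 1) + n by ring, pow_add]
      field_simp
    rw [e]
    exact (hasSum_const_div_pow (D := D) hy1).mul_right ((y⁻¹) ^ n)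
  have hclose : baseVal y d - baseVal y c ≤ D / δ * ((1 + δ)⁻¹) ^ n := by
    have h1 : baseVal y d - baseVal y c
        = ∑' i : ℕ, ((d i : ℝ) / y ^ (i + 1) - (c i : ℝ) / y ^ (i + 1)) :=
      (hsd.tsum_sub hsy).symm
    have h2 := (hsd.sub hsy).sum_add_tsum_nat_add n
    have h3 : ∑ i ∈ Finset.range n, ((d i : ℝ) / y ^ (i + 1) - (c i : ℝ) / y ^ (i + 1)) = 0 := by
      refine Finset.sum_eq_zero fun i hi => ?_
      rw [hagree i (Finset.mem_range.1 hi), sub_self]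
    rw [h1, ← h2, h3, zero_add]
    calc _ ≤ ∑' i : ℕ, D / y ^ (i + n + 1) := by
          refine Summable.tsum_le_tsum (fun i => ?_) ((summable_nat_add_iff n).2 (hsd.sub hsy))
            htail.summable
          have h4 := hdD (i + n)
          have h5 : (0 : ℝ) ≤ c (i + n) := by exact_mod_cast hc0 (i + n)
          rw [← sub_div]
          gcongr
          linarith
      _ = D / (y - 1) * (y⁻¹) ^ n := htail.tsum_eq
      _ ≤ _ := by
          gcongr
          linarith
  have hmono : x⁻¹ - y⁻¹ ≤ baseVal x c - baseVal y c := by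
    have h1 : baseVal x c - baseVal y c
        = ∑' i : ℕ, ((c i : ℝ) / x ^ (i + 1) - (c i : ℝ) / y ^ (i + 1)) :=
      (hsx.tsum_sub hsy).symm
    have h2 := (hsx.sub hsy).le_tsum 0 (fun i _ => by
      have h5 : (0 : ℝ) ≤ c i := by exact_mod_cast hc0 i
      rw [sub_nonneg]
      gcongr)
    rw [h1]
    refine le_trans ?_ h2
    have h5 : (1 : ℝ) ≤ c 0 := by exact_mod_cast hc1
    have h6 : y⁻¹ ≤ x⁻¹ := by gcongr
    simp only [zero_add, pow_one, div_eq_mul_inv]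
    nlinarith
  have hfin : x⁻¹ - y⁻¹ ≤ D / δ * ((1 + δ)⁻¹) ^ n := by linarith
  have hx0 : 0 < x := by linarith
  have hy0 : 0 < y := by linarith
  have hE : 0 ≤ D / δ * ((1 + δ)⁻¹) ^ n := by positivity
  calc y - x = x * y * (x⁻¹ - y⁻¹) := by field_simp
    _ ≤ x * y * (D / δ * ((1 + δ)⁻¹) ^ n) := by gcongr
    _ ≤ (D + 1) ^ 2 * (D / δ * ((1 + δ)⁻¹) ^ n) := by
        gcongr
        nlinarith
    _ = _ := by ring

lemma continuousOn_baseVal {D : ℝ} {c : ℕ → ℤ} (h0 : ∀ i, 0 ≤ c i)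
    (hD : ∀ i, (c i : ℝ) ≤ D) {b : ℝ} (hb : 1 < b) :
    ContinuousOn (fun β => baseVal β c) (Ici b) := by
  refine continuousOn_tsum (u := fun i => (c i : ℝ) / b ^ (i + 1)) (fun i => ?_)
    (summable_digits hb h0 hD) (fun i x hx => ?_)
  · refine ContinuousOn.div continuousOn_const (by fun_prop) (fun x hx => ?_)
    have : 0 < x := lt_of_lt_of_le (by linarith) hx
    positivity
  · have h1 : 0 < x := lt_of_lt_of_le (by linarith) hx
    have h2 : (0 : ℝ) ≤ c i := by exact_mod_cast h0 i
    have h3 : b ≤ x := hx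
    rw [Real.norm_of_nonneg (by positivity)]
    gcongr

/-- A bounded digit sequence with at least two nonzero digits, one of them the first, has value
one in some base. -/
lemma exists_base {D : ℝ} {c : ℕ → ℤ} (h0 : ∀ i, 0 ≤ c i) (hD : ∀ i, (c i : ℝ) ≤ D)
    (h1 : 1 ≤ c 0) {j : ℕ} (hj : j ≠ 0) (hcj : 1 ≤ c j) : ∃ β : ℝ, 1 < β ∧ baseVal β c = 1 := by
  have hD1 : (1 : ℝ) ≤ D := le_trans (by exact_mod_cast h1) (hD 0)
  obtain ⟨b, hb1, hb2, hbv⟩ : ∃ b : ℝ, 1 < b ∧ b < 2 ∧ 1 < b⁻¹ + (b ^ (j + 1))⁻¹ := by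
    have hcont : ContinuousAt (fun b : ℝ => b⁻¹ + (b ^ (j + 1))⁻¹) 1 := by
      refine ContinuousAt.add (continuousAt_id.inv₀ (by simp)) ?_
      exact ContinuousAt.inv₀ (by fun_prop) (by simp)
    have hev : ∀ᶠ b : ℝ in 𝓝[>] 1, 1 < b⁻¹ + (b ^ (j + 1))⁻¹ := by
      have := hcont.eventually (lt_mem_nhds (a := 1) (by norm_num))
      exact this.filter_mono nhdsWithin_le_nhds
    have h2 : ∀ᶠ b : ℝ in 𝓝[>] 1, b < 2 :=
      (gt_mem_nhds (by norm_num : (1 : ℝ) < 2)).filter_mono nhdsWithin_le_nhds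
    obtain ⟨b, hb⟩ := (hev.and (h2.and self_mem_nhdsWithin)).exists
    exact ⟨b, hb.2.2, hb.2.1, hb.1⟩
  have hlow : 1 ≤ baseVal b c := by
    have hs := (summable_digits hb1 h0 hD).sum_le_tsum {0, j} (fun i _ => by
      have : (0 : ℝ) ≤ c i := by exact_mod_cast h0 i
      positivity)
    rw [Finset.sum_pair hj.symm] at hs
    have e1 : (1 : ℝ) ≤ c 0 := by exact_mod_cast h1
    have e2 : (1 : ℝ) ≤ c j := by exact_mod_cast hcj
    have e3 : b⁻¹ ≤ (c 0 : ℝ) / b ^ (0 + 1) := by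
      rw [zero_add, pow_one, inv_eq_one_div]
      gcongr
    have e4 : (b ^ (j + 1))⁻¹ ≤ (c j : ℝ) / b ^ (j + 1) := by
      rw [inv_eq_one_div]
      gcongr
    exact le_trans (by linarith) hs
  have hhigh : baseVal (D + 1) c ≤ 1 := by
    have := baseVal_le (β := D + 1) (by linarith) h0 hD
    rwa [add_sub_cancel_right, div_self (by linarith)] at this
  obtain ⟨β, hβ, hv⟩ := intermediate_value_Icc' (by linarith : b ≤ D + 1)
    ((continuousOn_baseVal h0 hD hb1).mono Icc_subset_Ici_self) ⟨hhigh, hlow⟩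
  exact ⟨β, lt_of_lt_of_le hb1 hβ.1, hv⟩

/-- Polynomially many balls of exponentially small radius suffice for box dimension zero. -/
lemma hasBoxDimZero_of_cover {G : Set ℝ} {K ν : ℝ} (hν0 : 0 < ν) (hν1 : ν < 1) (hK : 0 < K) (k : ℕ)
    (h : ∀ N : ℕ, ∃ F : Finset ℝ, F.card ≤ (N + 1) ^ k ∧
      G ⊆ ⋃ x ∈ F, Metric.ball x (K * ν ^ N)) : HasBoxDimZero G := by
  intro s hs
  have hνs : ν ^ s < 1 := Real.rpow_lt_one hν0.le hν1 hs
  have hνs0 : 0 < ν ^ s := Real.rpow_pos_of_pos hν0 s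
  have hlim : Tendsto (fun N : ℕ => ((N : ℝ) + 2) ^ k * (ν ^ s) ^ N) atTop (𝓝 0) := by
    have h1 := tendsto_pow_const_mul_const_pow_of_lt_one k hνs0.le hνs
    have h2 := (tendsto_add_atTop_iff_nat 2).2 h1
    have h3 := h2.mul_const (((ν ^ s) ^ 2)⁻¹)
    rw [zero_mul] at h3
    refine h3.congr fun N => ?_
    push_cast
    rw [pow_add]
    field_simp
  have hev := hlim.eventually (gt_mem_nhds (Real.rpow_pos_of_pos hK (-s)))
  obtain ⟨N₀, hN₀⟩ := eventually_atTop.1 hev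
  have hsmall : ∀ᶠ ε : ℝ in 𝓝[>] 0, ε < K * ν ^ (N₀ + 1) :=
    (gt_mem_nhds (by positivity)).filter_mono nhdsWithin_le_nhds
  filter_upwards [hsmall, self_mem_nhdsWithin] with ε hε hε0
  have hε0' : (0 : ℝ) < ε := hε0
  have hex : ∃ N : ℕ, K * ν ^ N ≤ ε := by
    obtain ⟨N, hN⟩ := exists_pow_lt_of_lt_one (div_pos hε0' hK) hν1
    refine ⟨N, ?_⟩
    rw [lt_div_iff₀ hK] at hN
    linarith
  classical
  obtain ⟨N, hN, hmin⟩ : ∃ N : ℕ, K * ν ^ N ≤ ε ∧ ∀ M < N, ε < K * ν ^ M :=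
    ⟨Nat.find hex, Nat.find_spec hex, fun M hM => not_le.1 (Nat.find_min hex hM)⟩
  have hNlarge : N₀ + 1 < N := by
    by_contra hle
    have : K * ν ^ (N₀ + 1) ≤ K * ν ^ N := by
      gcongr ?_ * ?_
      exact pow_le_pow_of_le_one hν0.le hν1.le (not_lt.1 hle)
    linarith
  obtain ⟨M, rfl⟩ : ∃ M, N = M + 1 := ⟨N - 1, by omega⟩
  obtain ⟨F, hcard, hcov⟩ := h (M + 1)
  refine le_trans (sInf_le ⟨F, rfl, hcov.trans ?_⟩) ?_
  · exact iUnion₂_mono fun x _ => Metric.ball_subset_ball hN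
  · have h1 : (F.card : ENNReal) ≤ ENNReal.ofReal (((M : ℝ) + 2) ^ k) := by
      rw [← ENNReal.ofReal_natCast]
      refine ENNReal.ofReal_le_ofReal ?_
      calc (F.card : ℝ) ≤ (((M + 1 + 1) ^ k : ℕ) : ℝ) := by exact_mod_cast hcard
        _ = _ := by push_cast; ring
    refine h1.trans (ENNReal.ofReal_le_ofReal ?_)
    have h2 := hN₀ M (by omega)
    have h3 := hmin M (by omega)
    have h4 : (K * ν ^ M) ^ (-s) ≤ ε ^ (-s) :=
      Real.rpow_le_rpow_of_nonpos hε0' h3.le (by linarith)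
    refine le_trans ?_ h4
    have h5 : (ν ^ M) ^ s = (ν ^ s) ^ M := by
      rw [← Real.rpow_natCast, ← Real.rpow_natCast, ← Real.rpow_mul hν0.le,
        ← Real.rpow_mul hν0.le, mul_comm]
    rw [Real.mul_rpow hK.le (by positivity), Real.rpow_neg (by positivity : (0 : ℝ) ≤ ν ^ M),
      h5, ← div_eq_mul_inv, le_div_iff₀ (by positivity)]
    exact h2.le

end

/-- The `n`-fold left shift on integer sequences. -/
def shiftZ (n : ℕ) (x : ℕ → ℤ) : ℕ → ℤ := fun i => x (i + n)

/-- Sequences over `{0,1}`. -/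
def IsBin (ρ : ℕ → ℤ) : Prop := ∀ i, ρ i = 0 ∨ ρ i = 1

lemma shiftZ_shiftZ (a b : ℕ) (x : ℕ → ℤ) : shiftZ a (shiftZ b x) = shiftZ (a + b) x := by
  ext i
  simp [shiftZ, add_assoc]

lemma IsBin.shiftZ {ρ : ℕ → ℤ} (h : IsBin ρ) (n : ℕ) : IsBin (shiftZ n ρ) := fun i => h (i + n)

lemma IsBin.one_sub {ρ : ℕ → ℤ} (h : IsBin ρ) : IsBin (fun i => 1 - ρ i) := fun i => by
  rcases h i with h | h <;> simp [h]

lemma toLex_lt_iff {x y : ℕ → ℤ} :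
    toLex x < toLex y ↔ ∃ i, (∀ j < i, x j = y j) ∧ x i < y i := Iff.rfl

lemma lex_prefix_cases {x y : ℕ → ℤ} (h : toLex x ≤ toLex y) (n : ℕ) :
    (∃ i < n, (∀ j < i, x j = y j) ∧ x i < y i) ∨ ∀ i < n, x i = y i := by
  rcases h.eq_or_lt with h | ⟨i, h1, h2⟩
  · right
    intro i _
    exact congrFun (toLex_inj.1 h) i
  · by_cases hi : i < n
    · exact Or.inl ⟨i, hi, h1, h2⟩
    · exact Or.inr fun j hj => h1 j (by omega)

lemma lex_le_shiftZ {x y : ℕ → ℤ} (h : toLex x ≤ toLex y) {n : ℕ} (he : ∀ i < n, x i = y i) :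
    toLex (shiftZ n x) ≤ toLex (shiftZ n y) := by
  rcases h.eq_or_lt with h | ⟨i, h1, h2⟩
  · rw [toLex_inj.1 h]
  · have hi : n ≤ i := by
      by_contra hlt
      exact absurd (he i (by omega)) h2.ne
    refine le_of_lt (toLex_lt_iff.2 ⟨i - n, fun j hj => h1 (j + n) (by omega), ?_⟩)
    simpa [shiftZ, Nat.sub_add_cancel hi] using h2

lemma toLex_neg_le_neg {x y : ℕ → ℤ} (h : toLex x ≤ toLex y) :
    toLex (fun i => -y i) ≤ toLex (fun i => -x i) := by
  rcases h.eq_or_lt with h | ⟨i, h1, h2⟩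
  · rw [toLex_inj.1 h]
  · refine le_of_lt (toLex_lt_iff.2 ⟨i, fun j hj => ?_, ?_⟩)
    · have : x j = y j := h1 j hj
      simp [this]
    · have : x i < y i := h2
      simpa using this

lemma toLex_const_add {x y : ℕ → ℤ} (k : ℤ) (h : toLex x ≤ toLex y) :
    toLex (fun i => k + x i) ≤ toLex (fun i => k + y i) := by
  rcases h.eq_or_lt with h | ⟨i, h1, h2⟩
  · rw [toLex_inj.1 h]
  · refine le_of_lt (toLex_lt_iff.2 ⟨i, fun j hj => ?_, ?_⟩)
    · have : x j = y j := h1 j hj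
      simp [this]
    · have : x i < y i := h2
      simpa using this

/-- `X` and `Y` are `m`-periodic, aperiodic below `m`, and are the lexicographic minimum and
maximum of a shift orbit. -/
structure ExtremalPair (m : ℕ) (X Y : ℕ → ℤ) : Prop where
  pos : 0 < m
  per_X : ∀ i, X (i + m) = X i
  per_Y : ∀ i, Y (i + m) = Y i
  min_X : ∀ n, toLex X ≤ toLex (shiftZ n X)
  min_Y : ∀ n, toLex X ≤ toLex (shiftZ n Y)
  max_X : ∀ n, toLex (shiftZ n X) ≤ toLex Y
  max_Y : ∀ n, toLex (shiftZ n Y) ≤ toLex Y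
  aper_X : ∀ n, shiftZ n X = X → m ∣ n
  aper_Y : ∀ n, shiftZ n Y = Y → m ∣ n

lemma shiftZ_mul_period {m : ℕ} {X : ℕ → ℤ} (h : ∀ i, X (i + m) = X i) (k : ℕ) :
    shiftZ (k * m) X = X := by
  induction k with
  | zero => ext i; simp [shiftZ]
  | succ k ih =>
    ext i
    have := congrFun ih i
    simp only [shiftZ] at this ⊢
    rw [add_mul, one_mul, ← add_assoc, h, this]

lemma ExtremalPair.of_shift {m : ℕ} {X Y : ℕ → ℤ} {k : ℕ} (pos : 0 < m)
    (per : ∀ i, X (i + m) = X i) (hk : Y = shiftZ k X)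
    (hmin : ∀ n, toLex X ≤ toLex (shiftZ n X)) (hmax : ∀ n, toLex (shiftZ n X) ≤ toLex Y)
    (haper : ∀ n, shiftZ n X = X → m ∣ n) : ExtremalPair m X Y where
  pos := pos
  per_X := per
  per_Y i := by
    simp only [hk, shiftZ]
    rw [add_right_comm, per]
  min_X := hmin
  min_Y n := by
    rw [hk, shiftZ_shiftZ]
    exact hmin _
  max_X := hmax
  max_Y n := by
    conv_lhs => rw [hk, shiftZ_shiftZ]
    exact hmax _
  aper_X := haper
  aper_Y n hn := by
    apply haper
    have hkm : k ≤ k * m := Nat.le_mul_of_pos_right k pos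
    have h1 := congrArg (shiftZ (k * m - k)) hn
    rw [hk, shiftZ_shiftZ, shiftZ_shiftZ, shiftZ_shiftZ,
      show k * m - k + n + k = n + k * m by omega, Nat.sub_add_cancel hkm,
      ← shiftZ_shiftZ, shiftZ_mul_period per] at h1
    exact h1

/-- The orbit maximum is unique. -/
lemma max_shift_unique {X Y Y' : ℕ → ℤ} {k k' : ℕ} (h : Y = shiftZ k X) (h' : Y' = shiftZ k' X)
    (hmax : ∀ n, toLex (shiftZ n X) ≤ toLex Y) (hmax' : ∀ n, toLex (shiftZ n X) ≤ toLex Y') :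
    Y = Y' := by
  apply toLex_inj.1
  apply le_antisymm
  · conv_lhs => rw [h]
    exact hmax' k
  · conv_lhs => rw [h']
    exact hmax k'

lemma ExtremalPair.neg {m : ℕ} {X Y : ℕ → ℤ} (h : ExtremalPair m X Y) :
    ExtremalPair m (fun i => -Y i) (fun i => -X i) where
  pos := h.pos
  per_X i := by simp [h.per_Y]
  per_Y i := by simp [h.per_X]
  min_X n := toLex_neg_le_neg (h.max_Y n)
  min_Y n := toLex_neg_le_neg (h.max_X n)
  max_X n := toLex_neg_le_neg (h.min_Y n)
  max_Y n := toLex_neg_le_neg (h.min_X n)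
  aper_X n hn := h.aper_Y n (by
    ext i
    simpa [shiftZ] using congrFun hn i)
  aper_Y n hn := h.aper_X n (by
    ext i
    simpa [shiftZ] using congrFun hn i)

lemma ExtremalPair.const_add {m : ℕ} {X Y : ℕ → ℤ} (h : ExtremalPair m X Y) (k : ℤ) :
    ExtremalPair m (fun i => k + X i) (fun i => k + Y i) where
  pos := h.pos
  per_X i := by simp [h.per_X]
  per_Y i := by simp [h.per_Y]
  min_X n := toLex_const_add k (h.min_X n)
  min_Y n := toLex_const_add k (h.min_Y n)
  max_X n := toLex_const_add k (h.max_X n)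
  max_Y n := toLex_const_add k (h.max_Y n)
  aper_X n hn := h.aper_X n (by
    ext i
    simpa [shiftZ] using congrFun hn i)
  aper_Y n hn := h.aper_Y n (by
    ext i
    simpa [shiftZ] using congrFun hn i)

/-- The first `m` letters of an orbit maximum are unbordered. -/
lemma ExtremalPair.unbordered {m : ℕ} {X Y : ℕ → ℤ} (h : ExtremalPair m X Y) {j : ℕ}
    (hj0 : 0 < j) (hjm : j < m) : ∃ i < m - j, (∀ l < i, Y (l + j) = Y l) ∧ Y (i + j) < Y i := by
  rcases lex_prefix_cases (h.max_Y j) (m - j) with h1 | h1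
  · exact h1
  · exfalso
    have h2 := lex_le_shiftZ (h.max_Y j) h1
    rw [shiftZ_shiftZ, Nat.sub_add_cancel hjm.le] at h2
    have h3 : shiftZ m Y = Y := by
      ext i
      exact h.per_Y i
    rw [h3] at h2
    have h4 := toLex_inj.1 (le_antisymm (h.max_Y (m - j)) h2)
    have := Nat.le_of_dvd (by omega) (h.aper_Y _ h4)
    omega

/-- The block substitution driven by a binary sequence `ρ`: the transition from `ρ i` to
`ρ (i + 1)` emits the first `m` letters of `Y` (if `ρ i = 0`) or of `X` (if `ρ i = 1`), the last
letter being changed by `ρ (i + 1) - ρ i`. -/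
def blockSeq (m : ℕ) (X Y ρ : ℕ → ℤ) : ℕ → ℤ := fun n =>
  (if ρ (n / m) = 0 then Y (n % m) else X (n % m)) +
    if n % m = m - 1 then ρ (n / m + 1) - ρ (n / m) else 0

lemma blockSeq_apply {m : ℕ} (X Y ρ : ℕ → ℤ) (i : ℕ) {t : ℕ} (ht : t < m) :
    blockSeq m X Y ρ (m * i + t) =
      (if ρ i = 0 then Y t else X t) + if t = m - 1 then ρ (i + 1) - ρ i else 0 := by
  have h1 : (m * i + t) / m = i := by
    rw [Nat.mul_add_div (by omega), Nat.div_eq_of_lt ht, add_zero]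
  have h2 : (m * i + t) % m = t := by
    rw [Nat.mul_add_mod, Nat.mod_eq_of_lt ht]
  simp only [blockSeq, h1, h2]

lemma blockSeq_apply_lt {m : ℕ} (X Y ρ : ℕ → ℤ) {t : ℕ} (ht : t < m) :
    blockSeq m X Y ρ t =
      (if ρ 0 = 0 then Y t else X t) + if t = m - 1 then ρ 1 - ρ 0 else 0 := by
  simpa using blockSeq_apply X Y ρ 0 ht

lemma shiftZ_blockSeq {m : ℕ} (hm : 0 < m) (X Y ρ : ℕ → ℤ) (i : ℕ) :
    shiftZ (m * i) (blockSeq m X Y ρ) = blockSeq m X Y (shiftZ i ρ) := by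
  ext n
  have h1 : (n + m * i) / m = n / m + i := Nat.add_mul_div_left n i hm
  simp only [shiftZ, blockSeq, h1, Nat.add_mul_mod_self_left, add_right_comm]
  rfl

lemma blockSeq_neg {m : ℕ} (X Y : ℕ → ℤ) {ρ : ℕ → ℤ} (hρ : IsBin ρ) :
    blockSeq m (fun i => -Y i) (fun i => -X i) (fun i => 1 - ρ i) =
      fun i => -blockSeq m X Y ρ i := by
  ext n
  simp only [blockSeq]
  rcases hρ (n / m) with h | h <;> split_ifs <;> simp_all
  all_goals ring

lemma blockSeq_strictMono {m : ℕ} (hm : 0 < m) (X Y : ℕ → ℤ) {ρ ρ' : ℕ → ℤ} (h0 : ρ 0 = ρ' 0)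
    (hlt : toLex ρ < toLex ρ') : toLex (blockSeq m X Y ρ) < toLex (blockSeq m X Y ρ') := by
  obtain ⟨i, h1, h2⟩ := toLex_lt_iff.1 hlt
  obtain ⟨l, rfl⟩ : ∃ l, i = l + 1 := by
    rcases i with _ | l
    · exact absurd h0 h2.ne
    · exact ⟨l, rfl⟩
  refine toLex_lt_iff.2 ⟨m * l + (m - 1), fun n hn => ?_, ?_⟩
  · have hdm := Nat.div_add_mod n m
    have hml := Nat.mod_lt n hm
    have hle : n / m ≤ l := by
      rw [← Nat.lt_succ_iff, Nat.div_lt_iff_lt_mul hm, Nat.succ_mul, Nat.mul_comm l m]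
      omega
    have e1 : ρ (n / m) = ρ' (n / m) := h1 _ (by omega)
    rcases hle.eq_or_lt with he | hl
    · have : n % m ≠ m - 1 := by
        rw [he] at hdm
        omega
      simp only [blockSeq, if_neg this, e1]
    · have e2 : ρ (n / m + 1) = ρ' (n / m + 1) := h1 _ (by omega)
      simp only [blockSeq, e1, e2]
  · rw [blockSeq_apply _ _ _ _ (by omega), blockSeq_apply _ _ _ _ (by omega), h1 l (by omega)]
    simpa using h2

/-- A window of a block sequence that is not a block for the transition `0 → 1` is strictly
smaller than a sequence beginning with such a block. -/
lemma ExtremalPair.window_lt {m : ℕ} {X Y : ℕ → ℤ} (h : ExtremalPair m X Y) {ρ ρ' : ℕ → ℤ}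
    (hρ : IsBin ρ) (h0 : ρ' 0 = 0) (h1 : ρ' 1 = 1) {j : ℕ} (hjm : j < m)
    (hj : 0 < j ∨ ¬(ρ 0 = 0 ∧ ρ 1 = 1)) :
    toLex (shiftZ j (blockSeq m X Y ρ)) < toLex (blockSeq m X Y ρ') := by
  have hB : ∀ i < m, blockSeq m X Y ρ' i = Y i + if i = m - 1 then 1 else 0 := fun i hi => by
    rw [blockSeq_apply_lt _ _ _ hi]
    simp [h0, h1]
  have hW1 : ∀ i, i + j < m → shiftZ j (blockSeq m X Y ρ) i =
      (if ρ 0 = 0 then Y (i + j) else X (i + j)) + if i + j = m - 1 then ρ 1 - ρ 0 else 0 :=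
    fun i hi => blockSeq_apply_lt _ _ _ hi
  have hW2 : ∀ i < m, m ≤ i + j → shiftZ j (blockSeq m X Y ρ) i =
      if ρ 1 = 0 then Y (i + j - m) else X (i + j - m) := fun i hi hij => by
    have := blockSeq_apply X Y ρ 1 (show i + j - m < m by omega)
    have hne : i + j - m ≠ m - 1 := by omega
    rw [if_neg hne, add_zero, mul_one, Nat.add_sub_cancel' hij] at this
    exact this
  have hper : ∀ Z : ℕ → ℤ, (∀ i, Z (i + m) = Z i) → (∀ n, toLex (shiftZ n Z) ≤ toLex Y) →
      (∀ i < m, shiftZ j (blockSeq m X Y ρ) i = Z (i + j)) →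
      toLex (shiftZ j (blockSeq m X Y ρ)) < toLex (blockSeq m X Y ρ') := by
    intro Z _ hZ hW
    rcases lex_prefix_cases (hZ j) m with ⟨i, hi, he, hl⟩ | he
    · refine toLex_lt_iff.2 ⟨i, fun l hl => ?_, ?_⟩
      · rw [hW l (by omega), hB l (by omega), if_neg (by omega), add_zero]
        exact he l hl
      · rw [hW i hi, hB i hi]
        have : Z (i + j) < Y i := hl
        split_ifs <;> omega
    · refine toLex_lt_iff.2 ⟨m - 1, fun l hl => ?_, ?_⟩
      · rw [hW l (by omega), hB l (by omega), if_neg (by omega), add_zero]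
        exact he l (by omega)
      · rw [hW _ (by omega), hB _ (by omega)]
        have : Z (m - 1 + j) = Y (m - 1) := he _ (by omega)
        simp [this]
  rcases hρ 0 with r0 | r0 <;> rcases hρ 1 with r1 | r1
  · refine hper Y h.per_Y h.max_Y fun i hi => ?_
    rcases lt_or_ge (i + j) m with hij | hij
    · rw [hW1 i hij]
      simp [r0, r1]
    · rw [hW2 i hi hij, if_pos r1, ← h.per_Y, Nat.sub_add_cancel hij]
  · have hj0 : 0 < j := hj.resolve_right (by simp [r0, r1])
    obtain ⟨i, hi, he, hl⟩ := h.unbordered hj0 hjm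
    have hpre : ∀ l < i, shiftZ j (blockSeq m X Y ρ) l = blockSeq m X Y ρ' l := fun l hl => by
      rw [hW1 l (by omega), hB l (by omega), if_pos r0, if_neg (by omega), if_neg (by omega),
        add_zero, add_zero, he l hl]
    by_cases hlast : i + j = m - 1
    · have hWi : shiftZ j (blockSeq m X Y ρ) i = Y (i + j) + 1 := by
        rw [hW1 i (by omega), if_pos hlast, if_pos r0, r0, r1]
        simp
      have hBi : blockSeq m X Y ρ' i = Y i := by
        rw [hB i (by omega), if_neg (by omega), add_zero]
      rcases (Int.add_one_le_iff.2 hl).lt_or_eq with hl' | hl'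
      · exact toLex_lt_iff.2 ⟨i, hpre, by rw [hWi, hBi]; exact hl'⟩
      · have hpre' : ∀ l ≤ i, shiftZ j (blockSeq m X Y ρ) l = blockSeq m X Y ρ' l :=
          fun l hl => by
            rcases hl.lt_or_eq with hl | rfl
            · exact hpre l hl
            · rw [hWi, hBi, hl']
        have hWX : ∀ l < j, shiftZ j (blockSeq m X Y ρ) (l + (m - j)) = X l := fun l hlj => by
          rw [hW2 _ (by omega) (by omega), if_neg (by omega)]
          congr 1
          omega
        rcases lex_prefix_cases (h.min_Y (m - j)) j with ⟨l, hlj, he', hl'⟩ | he'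
        · refine toLex_lt_iff.2 ⟨l + (m - j), fun n hn => ?_, ?_⟩
          · rcases le_or_gt n i with hni | hni
            · exact hpre' n hni
            · have e1 := hWX (n - (m - j)) (by omega)
              have e2 : X (n - (m - j)) = Y (n - (m - j) + (m - j)) := he' _ (by omega)
              rw [Nat.sub_add_cancel (by omega)] at e1 e2
              rw [e1, e2, hB n (by omega), if_neg (by omega), add_zero]
          · rw [hWX l hlj, hB _ (by omega)]
            have : X l < Y (l + (m - j)) := hl'
            split_ifs <;> omega
        · refine toLex_lt_iff.2 ⟨m - 1, fun n hn => ?_, ?_⟩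
          · rcases le_or_gt n i with hni | hni
            · exact hpre' n hni
            · have e1 := hWX (n - (m - j)) (by omega)
              have e2 : X (n - (m - j)) = Y (n - (m - j) + (m - j)) := he' _ (by omega)
              rw [Nat.sub_add_cancel (by omega)] at e1 e2
              rw [e1, e2, hB n (by omega), if_neg (by omega), add_zero]
          · have e1 := hWX (j - 1) (by omega)
            have e2 : X (j - 1) = Y (j - 1 + (m - j)) := he' _ (by omega)
            rw [show j - 1 + (m - j) = m - 1 by omega] at e1 e2
            rw [e1, e2, hB _ (by omega)]
            simp
    · refine toLex_lt_iff.2 ⟨i, hpre, ?_⟩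
      rw [hW1 i (by omega), hB i (by omega), if_neg hlast, if_pos r0, if_neg (by omega),
        add_zero, add_zero]
      exact hl
  · have hcorr : ∀ i, i + j < m → shiftZ j (blockSeq m X Y ρ) i =
        X (i + j) + if i + j = m - 1 then -1 else 0 := fun i hi => by
      rw [hW1 i hi]
      simp [r0, r1]
    rcases lex_prefix_cases (h.max_X j) (m - j) with ⟨i, hi, he, hl⟩ | he
    · refine toLex_lt_iff.2 ⟨i, fun l hl => ?_, ?_⟩
      · rw [hcorr l (by omega), hB l (by omega), if_neg (by omega), if_neg (by omega), add_zero,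
          add_zero]
        exact he l hl
      · rw [hcorr i (by omega), hB i (by omega)]
        have : X (i + j) < Y i := hl
        split_ifs <;> omega
    · refine toLex_lt_iff.2 ⟨m - j - 1, fun l hl => ?_, ?_⟩
      · rw [hcorr l (by omega), hB l (by omega), if_neg (by omega), if_neg (by omega), add_zero,
          add_zero]
        exact he l (by omega)
      · rw [hcorr _ (by omega), hB _ (by omega)]
        have : X (m - j - 1 + j) = Y (m - j - 1) := he _ (by omega)
        split_ifs <;> omega
  · refine hper X h.per_X h.max_X fun i hi => ?_
    rcases lt_or_ge (i + j) m with hij | hij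
    · rw [hW1 i hij]
      simp [r0, r1]
    · rw [hW2 i hi hij, if_neg (by omega), ← h.per_X, Nat.sub_add_cancel hij]

/-- Prepending a letter to a sequence. -/
def consZ (d : ℤ) (c : ℕ → ℤ) : ℕ → ℤ := fun i => if i = 0 then d else c (i - 1)

@[simp] lemma consZ_zero (d : ℤ) (c : ℕ → ℤ) : consZ d c 0 = d := rfl

@[simp] lemma consZ_succ (d : ℤ) (c : ℕ → ℤ) (i : ℕ) : consZ d c (i + 1) = c i := rfl

lemma IsBin.consZ {c : ℕ → ℤ} (h : IsBin c) {d : ℤ} (hd : d = 0 ∨ d = 1) : IsBin (consZ d c) := by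
  intro i
  rcases i with _ | i
  · exact hd
  · exact h i

lemma consZ_eq_shiftZ {q : ℕ} (hq : 0 < q) {R : ℕ → ℤ} (hper : ∀ i, R (i + q) = R i) :
    consZ (R (q - 1)) R = shiftZ (q - 1) R := by
  ext i
  rcases i with _ | i
  · simp [shiftZ]
  · simp only [consZ_succ, shiftZ]
    rw [← hper, show i + 1 + (q - 1) = i + q by omega]

lemma toLex_consZ_le {d : ℤ} {x y : ℕ → ℤ} (h : toLex x ≤ toLex y) :
    toLex (consZ d x) ≤ toLex (consZ d y) := by
  rcases h.eq_or_lt with h | ⟨i, h1, h2⟩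
  · rw [toLex_inj.1 h]
  · refine le_of_lt (toLex_lt_iff.2 ⟨i + 1, fun j hj => ?_, h2⟩)
    rcases j with _ | j
    · rfl
    · exact h1 j (by omega)

lemma shiftZ_eq_consZ (i : ℕ) (ρ : ℕ → ℤ) : shiftZ i ρ = consZ (ρ i) (shiftZ (i + 1) ρ) := by
  ext l
  rcases l with _ | l
  · simp [shiftZ]
  · simp only [shiftZ, consZ_succ]
    congr 1
    omega

/-- All shifts of a block sequence lie below the block sequence driven by `0 B`, with equality only
at block boundaries. -/
lemma ExtremalPair.shiftZ_blockSeq_le {m : ℕ} {X Y : ℕ → ℤ} (h : ExtremalPair m X Y)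
    {ρ B : ℕ → ℤ} (hρ : IsBin ρ) (hB1 : B 0 = 1) (hmax : ∀ i, toLex (shiftZ i ρ) ≤ toLex B)
    (n : ℕ) :
    toLex (shiftZ n (blockSeq m X Y ρ)) < toLex (blockSeq m X Y (consZ 0 B)) ∨
      m ∣ n ∧ shiftZ (n / m) ρ = consZ 0 B := by
  have hn : n = n % m + m * (n / m) := (Nat.mod_add_div n m).symm
  have hs : shiftZ n (blockSeq m X Y ρ) =
      shiftZ (n % m) (blockSeq m X Y (shiftZ (n / m) ρ)) := by
    rw [← shiftZ_blockSeq h.pos, shiftZ_shiftZ, ← hn]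
  rw [hs]
  by_cases hc : 0 < n % m ∨ ¬(shiftZ (n / m) ρ 0 = 0 ∧ shiftZ (n / m) ρ 1 = 1)
  · exact Or.inl (h.window_lt (ρ' := consZ 0 B) (hρ.shiftZ _) rfl hB1 (Nat.mod_lt n h.pos) hc)
  · push Not at hc
    obtain ⟨hm0, h0, _⟩ := hc
    have hm0' : n % m = 0 := by omega
    have hle : toLex (shiftZ (n / m) ρ) ≤ toLex (consZ 0 B) := by
      have h0' : ρ (n / m) = 0 := by simpa [shiftZ] using h0
      rw [shiftZ_eq_consZ, h0']
      exact toLex_consZ_le (hmax _)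
    rw [hm0']
    rcases hle.lt_or_eq with hlt | heq
    · exact Or.inl (blockSeq_strictMono h.pos X Y h0 hlt)
    · exact Or.inr ⟨Nat.dvd_of_mod_eq_zero hm0', toLex_inj.1 heq⟩

lemma ExtremalPair.blockSeq_max {m q : ℕ} {X Y R B : ℕ → ℤ} (h : ExtremalPair m X Y)
    (h' : ExtremalPair q R B) (hB : IsBin B) (hB1 : B 0 = 1) (hB0 : B (q - 1) = 0) :
    (∀ ρ, IsBin ρ → (∀ i, toLex (shiftZ i ρ) ≤ toLex B) →
      ∀ n, toLex (shiftZ n (blockSeq m X Y ρ)) ≤ toLex (blockSeq m X Y (consZ 0 B))) ∧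
    ∀ n, shiftZ n (blockSeq m X Y (consZ 0 B)) = blockSeq m X Y (consZ 0 B) → m * q ∣ n := by
  refine ⟨fun ρ hρ hmax n => ?_, fun n hn => ?_⟩
  · rcases h.shiftZ_blockSeq_le hρ hB1 hmax n with hlt | ⟨⟨i, rfl⟩, he⟩
    · exact hlt.le
    · rw [Nat.mul_div_cancel_left i h.pos] at he
      rw [shiftZ_blockSeq h.pos, he]
  · have hc : consZ 0 B = shiftZ (q - 1) B := by
      rw [← consZ_eq_shiftZ h'.pos h'.per_Y, hB0]
    have hmax : ∀ i, toLex (shiftZ i (consZ 0 B)) ≤ toLex B := fun i => by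
      rw [hc, shiftZ_shiftZ]
      exact h'.max_Y _
    rcases h.shiftZ_blockSeq_le (hB.consZ (Or.inl rfl)) hB1 hmax n with hlt | ⟨⟨i, rfl⟩, he⟩
    · rw [hn] at hlt
      exact absurd hlt (lt_irrefl _)
    · rw [Nat.mul_div_cancel_left i h.pos] at he
      have h1 := congrArg (shiftZ 1) he
      rw [shiftZ_shiftZ, add_comm, ← shiftZ_shiftZ] at h1
      exact Nat.mul_dvd_mul_left m (h'.aper_Y i h1)

/-- Block substitution of extremal pairs. -/
lemma ExtremalPair.blockSeq {m q : ℕ} {X Y R B : ℕ → ℤ} (h : ExtremalPair m X Y)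
    (h' : ExtremalPair q R B) (hR : IsBin R) (hB : IsBin B) (hB1 : B 0 = 1) (hB0 : B (q - 1) = 0)
    (hR0 : R 0 = 0) (hR1 : R (q - 1) = 1) :
    ExtremalPair (m * q) (blockSeq m X Y (consZ 1 R)) (blockSeq m X Y (consZ 0 B)) := by
  have hcB : consZ 0 B = shiftZ (q - 1) B := by
    rw [← consZ_eq_shiftZ h'.pos h'.per_Y, hB0]
  have hcR : consZ 1 R = shiftZ (q - 1) R := by
    rw [← consZ_eq_shiftZ h'.pos h'.per_X, hR1]
  have hper : ∀ (Z : ℕ → ℤ), (∀ i, Z (i + q) = Z i) → ∀ i,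
      _root_.blockSeq m X Y (shiftZ (q - 1) Z) (i + m * q) =
        _root_.blockSeq m X Y (shiftZ (q - 1) Z) i := fun Z hZ i => by
    have := congrFun (shiftZ_blockSeq h.pos X Y (shiftZ (q - 1) Z) q) i
    rw [shiftZ_shiftZ, add_comm, ← shiftZ_shiftZ, show shiftZ q Z = Z from funext hZ] at this
    exact this
  obtain ⟨hmax, haper⟩ := h.blockSeq_max h' hB hB1 hB0
  have h'' : ExtremalPair q (fun i => 1 - B i) (fun i => 1 - R i) := by
    simpa [sub_eq_add_neg] using h'.neg.const_add 1
  obtain ⟨hmin, haper'⟩ := h.neg.blockSeq_max h'' hR.one_sub (by simp [hR0]) (by simp [hR1])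
  have hcons : consZ 0 (fun i => 1 - R i) = fun i => 1 - consZ 1 R i := by
    ext i
    rcases i with _ | i <;> simp
  have hbR : IsBin (consZ 1 R) := hR.consZ (Or.inr rfl)
  have hbB : IsBin (consZ 0 B) := hB.consZ (Or.inl rfl)
  rw [hcons, blockSeq_neg X Y hbR] at hmin haper'
  have hmin' : ∀ ρ, IsBin ρ → (∀ i, toLex R ≤ toLex (shiftZ i ρ)) → ∀ n,
      toLex (_root_.blockSeq m X Y (consZ 1 R)) ≤
        toLex (shiftZ n (_root_.blockSeq m X Y ρ)) := fun ρ hρ hle n => by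
    have := toLex_neg_le_neg (hmin (fun i => 1 - ρ i) hρ.one_sub (fun i => by
      have := toLex_const_add 1 (toLex_neg_le_neg (hle i))
      exact this) n)
    rw [blockSeq_neg X Y hρ] at this
    simp only [shiftZ, neg_neg] at this
    exact this
  refine ⟨Nat.mul_pos h.pos h'.pos, ?_, ?_, ?_, ?_, ?_, ?_, ?_, haper⟩
  · rw [hcR]
    exact hper R h'.per_X
  · rw [hcB]
    exact hper B h'.per_Y
  · refine hmin' _ hbR fun i => ?_
    rw [hcR, shiftZ_shiftZ]
    exact h'.min_X _
  · refine hmin' _ hbB fun i => ?_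
    rw [hcB, shiftZ_shiftZ]
    exact h'.min_Y _
  · refine hmax _ hbR fun i => ?_
    rw [hcR, shiftZ_shiftZ]
    exact h'.max_X _
  · refine hmax _ hbB fun i => ?_
    rw [hcB, shiftZ_shiftZ]
    exact h'.max_Y _
  · refine fun n hn => haper' n ?_
    ext i
    simpa [shiftZ] using congrFun hn i

/-- The periodic integer sequence with period block `w`. -/
def perZ (w : List ℕ) : ℕ → ℤ := fun i => (perSeq w i : ℤ)

lemma perZ_of_lt {w : List ℕ} {i : ℕ} (hi : i < w.length) : perZ w i = (w.getD i 0 : ℤ) := by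
  simp [perZ, perSeq, Nat.mod_eq_of_lt hi]

lemma perZ_nonneg (w : List ℕ) (i : ℕ) : 0 ≤ perZ w i := Int.natCast_nonneg _

lemma perZ_period (w : List ℕ) (i : ℕ) : perZ w (i + w.length) = perZ w i := by
  simp [perZ, perSeq]

lemma perZ_mod (w : List ℕ) (i : ℕ) : perZ w (i % w.length) = perZ w i := by
  simp [perZ, perSeq]

lemma perZ_eq_of_period {w : List ℕ} {c : ℕ → ℤ} (hw : 0 < w.length)
    (hc : ∀ i, c (i + w.length) = c i) (h : ∀ i < w.length, (w.getD i 0 : ℤ) = c i) :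
    perZ w = c := by
  ext i
  have h1 := congrFun (shiftZ_mul_period hc (i / w.length)) (i % w.length)
  simp only [shiftZ] at h1
  rw [Nat.mod_add_div'] at h1
  rw [← perZ_mod, perZ_of_lt (Nat.mod_lt _ hw), h _ (Nat.mod_lt _ hw), h1]

lemma perZ_rotate {w : List ℕ} (hw : 0 < w.length) (k : ℕ) :
    perZ (w.rotate k) = shiftZ k (perZ w) := by
  refine perZ_eq_of_period (by simpa using hw) (fun i => ?_) (fun i hi => ?_)
  · simp only [shiftZ, List.length_rotate]
    rw [add_right_comm, perZ_period]
  · simp only [shiftZ]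
    rw [List.length_rotate] at hi
    rw [← perZ_mod, perZ_of_lt (Nat.mod_lt _ hw)]
    have h2 : (i + k) % w.length < w.length := Nat.mod_lt _ hw
    simp [List.getD_eq_getElem?_getD, hi, h2]

lemma perZ_lex_le {u v : List ℕ} (hl : u.length = v.length) (h : u ≤ v) :
    toLex (perZ u) ≤ toLex (perZ v) := by
  rcases h.eq_or_lt with rfl | hlt
  · exact le_rfl
  · rcases List.lt_iff_exists.1 hlt with ⟨_, h2⟩ | ⟨i, h1, h2, h3, h4⟩
    · omega
    · refine le_of_lt (toLex_lt_iff.2 ⟨i, fun j hj => ?_, ?_⟩)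
      · rw [perZ_of_lt (by omega), perZ_of_lt (by omega)]
        have := h3 j hj
        simp only [List.getD_eq_getElem?_getD]
        rw [List.getElem?_eq_getElem (by omega), List.getElem?_eq_getElem (by omega), this]
      · rw [perZ_of_lt h1, perZ_of_lt h2]
        simp only [List.getD_eq_getElem?_getD]
        rw [List.getElem?_eq_getElem h1, List.getElem?_eq_getElem h2]
        simpa using h4

lemma foldl_max_mem (l : List (List ℕ)) (a : List ℕ) : l.foldl max a = a ∨ l.foldl max a ∈ l := by
  induction l generalizing a with
  | nil => exact Or.inl rfl
  | cons b l ih =>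
    rw [List.foldl_cons]
    rcases ih (max a b) with h | h
    · rw [h]
      rcases max_choice a b with h' | h' <;> simp [h']
    · exact Or.inr (List.mem_cons_of_mem _ h)

lemma le_foldl_max (l : List (List ℕ)) (a : List ℕ) :
    a ≤ l.foldl max a ∧ ∀ b ∈ l, b ≤ l.foldl max a := by
  induction l generalizing a with
  | nil => simp
  | cons b l ih =>
    rw [List.foldl_cons]
    obtain ⟨h1, h2⟩ := ih (max a b)
    refine ⟨(le_max_left a b).trans h1, fun c hc => ?_⟩
    rcases List.mem_cons.1 hc with rfl | hc
    · exact (le_max_right a c).trans h1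
    · exact h2 c hc

lemma maxCyc_eq_rotate {w : List ℕ} (hw : w ≠ []) : ∃ k, maxCyc w = w.rotate k := by
  rcases foldl_max_mem ((List.range w.length).map w.rotate) [] with h | h
  · exfalso
    have hpos := List.length_pos_iff.2 hw
    have h1 := (le_foldl_max ((List.range w.length).map w.rotate) []).2 (w.rotate 0)
      (List.mem_map.2 ⟨0, List.mem_range.2 hpos, rfl⟩)
    rw [h, List.rotate_zero] at h1
    rcases h1.eq_or_lt with h2 | h2
    · exact hw h2
    · exact absurd h2 (List.not_lt_nil _)
  · obtain ⟨k, _, hk⟩ := List.mem_map.1 h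
    exact ⟨k, hk.symm⟩

lemma length_maxCyc {w : List ℕ} (hw : w ≠ []) : (maxCyc w).length = w.length := by
  obtain ⟨k, hk⟩ := maxCyc_eq_rotate hw
  rw [hk, List.length_rotate]

lemma perZ_maxCyc_eq_shiftZ {w : List ℕ} (hw : w ≠ []) :
    ∃ k, perZ (maxCyc w) = shiftZ k (perZ w) := by
  obtain ⟨k, hk⟩ := maxCyc_eq_rotate hw
  exact ⟨k, by rw [hk, perZ_rotate (List.length_pos_iff.2 hw)]⟩

lemma shiftZ_le_perZ_maxCyc {w : List ℕ} (hw : w ≠ []) (n : ℕ) :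
    toLex (shiftZ n (perZ w)) ≤ toLex (perZ (maxCyc w)) := by
  have hpos := List.length_pos_iff.2 hw
  rw [← perZ_rotate hpos]
  refine perZ_lex_le (by rw [List.length_rotate, length_maxCyc hw]) ?_
  rw [← List.rotate_mod]
  exact (le_foldl_max _ _).2 _
    (List.mem_map.2 ⟨n % w.length, List.mem_range.2 (Nat.mod_lt _ hpos), rfl⟩)

/-- Identifying the largest rotation of a word by its extremal property. -/
lemma perZ_maxCyc_eq {w : List ℕ} (hw : w ≠ []) {Y : ℕ → ℤ} {k : ℕ} (hY : Y = shiftZ k (perZ w))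
    (hmax : ∀ n, toLex (shiftZ n (perZ w)) ≤ toLex Y) : perZ (maxCyc w) = Y := by
  obtain ⟨k', hk'⟩ := perZ_maxCyc_eq_shiftZ hw
  exact max_shift_unique hk' hY (shiftZ_le_perZ_maxCyc hw) hmax

lemma length_wplus {w : List ℕ} (hw : w ≠ []) : (wplus w).length = w.length := by
  have := List.length_pos_iff.2 hw
  simp only [wplus, List.length_append, List.length_dropLast, List.length_singleton]
  omega

lemma length_wminus {w : List ℕ} (hw : w ≠ []) : (wminus w).length = w.length := by
  have := List.length_pos_iff.2 hw
  simp only [wminus, List.length_append, List.length_dropLast, List.length_singleton]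
  omega

lemma getD_dropLast_append {w : List ℕ} (f : ℕ → ℕ) {i : ℕ} (hi : i < w.length) :
    (w.dropLast ++ [f w.getLast!]).getD i 0 =
      if i = w.length - 1 then f (w.getD i 0) else w.getD i 0 := by
  have hne : w ≠ [] := by
    rintro rfl
    simp at hi
  split_ifs with h
  · have h1 : w.getLast! = w.getD i 0 := by
      rw [List.getLast!_eq_getLast?_getD, List.getLast?_eq_getElem?, h,
        List.getD_eq_getElem?_getD]
      rfl
    rw [h1, List.getD_eq_getElem?_getD, List.getElem?_append_right (by simp [h])]
    simp [h]
  · rw [List.getD_eq_getElem?_getD, List.getElem?_append_left (by simp; omega),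
      List.getElem?_dropLast, if_pos (by omega), List.getD_eq_getElem?_getD]

lemma getD_wplus {w : List ℕ} {i : ℕ} (hi : i < w.length) :
    ((wplus w).getD i 0 : ℤ) = perZ w i + if i = w.length - 1 then 1 else 0 := by
  rw [wplus, getD_dropLast_append (· + 1) hi, perZ_of_lt hi]
  split_ifs <;> simp

lemma getD_wminus {w : List ℕ} (hlast : 1 ≤ perZ w (w.length - 1)) {i : ℕ} (hi : i < w.length) :
    ((wminus w).getD i 0 : ℤ) = perZ w i + if i = w.length - 1 then -1 else 0 := by
  rw [wminus, getD_dropLast_append (· - 1) hi, perZ_of_lt hi]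
  split_ifs with h
  · rw [← h, perZ_of_lt hi] at hlast
    omega
  · simp

/-- A word whose periodic sequence is the aperiodic minimum of its shift orbit and whose last
letter is nonzero. -/
structure IsGood (S : List ℕ) : Prop where
  ne_nil : S ≠ []
  ext : ExtremalPair S.length (perZ S) (perZ (maxCyc S))
  last : 1 ≤ perZ S (S.length - 1)

/-- A binary good word beginning with `0` whose largest rotation begins with `1` and ends
with `0`. -/
structure IsBinGood (r : List ℕ) : Prop extends IsGood r where
  bin : IsBin (perZ r)
  first_zero : perZ r 0 = 0
  max_first : perZ (maxCyc r) 0 = 1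
  max_last : perZ (maxCyc r) (r.length - 1) = 0

lemma IsBinGood.max_bin {r : List ℕ} (h : IsBinGood r) : IsBin (perZ (maxCyc r)) := by
  obtain ⟨k, hk⟩ := perZ_maxCyc_eq_shiftZ h.ne_nil
  rw [hk]
  exact h.bin.shiftZ k

lemma IsBinGood.last_one {r : List ℕ} (h : IsBinGood r) : perZ r (r.length - 1) = 1 := by
  have := h.last
  rcases h.bin (r.length - 1) with h | h <;> omega

lemma lex_head_le {x y : ℕ → ℤ} (h : toLex x ≤ toLex y) : x 0 ≤ y 0 := by
  rcases lex_prefix_cases h 1 with ⟨i, hi, _, hl⟩ | he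
  · obtain rfl : i = 0 := by omega
    exact hl.le
  · exact (he 0 (by omega)).le

lemma IsGood.perZ_le {S : List ℕ} (h : IsGood S) (i : ℕ) : perZ S i ≤ perZ (maxCyc S) 0 := by
  simpa [shiftZ] using lex_head_le (h.ext.max_X i)

lemma IsGood.perZ_max_le {S : List ℕ} (h : IsGood S) (i : ℕ) :
    perZ (maxCyc S) i ≤ perZ (maxCyc S) 0 := by
  simpa [shiftZ] using lex_head_le (h.ext.max_Y i)

lemma IsGood.one_le_max {S : List ℕ} (h : IsGood S) : 1 ≤ perZ (maxCyc S) 0 :=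
  h.last.trans (h.perZ_le _)

/-- The block sequence of a word `S`. -/
def codeSeq (S : List ℕ) (ρ : ℕ → ℤ) : ℕ → ℤ :=
  blockSeq S.length (perZ S) (perZ (maxCyc S)) ρ

lemma IsGood.codeSeq_nonneg {S : List ℕ} (h : IsGood S) {ρ : ℕ → ℤ} (hρ : IsBin ρ) (n : ℕ) :
    0 ≤ codeSeq S ρ n := by
  have h1 := perZ_nonneg S (n % S.length)
  have h2 := perZ_nonneg (maxCyc S) (n % S.length)
  have h3 := h.last
  simp only [codeSeq, blockSeq]
  rcases hρ (n / S.length) with e | e <;> rcases hρ (n / S.length + 1) with e' | e' <;>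
    rw [e, e'] <;> by_cases h4 : n % S.length = S.length - 1 <;>
    simp only [h4, if_true, if_false] at h1 h2 ⊢ <;> simp <;> omega

lemma IsGood.codeSeq_le {S : List ℕ} (h : IsGood S) {ρ : ℕ → ℤ} (hρ : IsBin ρ) (n : ℕ) :
    codeSeq S ρ n ≤ perZ (maxCyc S) 0 + 1 := by
  have h1 := h.perZ_le (n % S.length)
  have h2 := h.perZ_max_le (n % S.length)
  simp only [codeSeq, blockSeq]
  rcases hρ (n / S.length) with e | e <;> rcases hρ (n / S.length + 1) with e' | e' <;>
    split_ifs <;> omega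

lemma getD_phiBlock {S : List ℕ} (h : IsGood S) {p d : ℕ} (hp : p ≤ 1) (hd : d ≤ 1) {t : ℕ}
    (ht : t < S.length) : ((phiBlock S p d).getD t 0 : ℤ) =
      (if (p : ℤ) = 0 then perZ (maxCyc S) t else perZ S t) +
        if t = S.length - 1 then (d : ℤ) - p else 0 := by
  have hl := length_maxCyc h.ne_nil
  have ht' : t < (maxCyc S).length := by omega
  have e1 := getD_wplus ht'
  have e2 := getD_wminus h.last ht
  rw [hl] at e1
  interval_cases p <;> interval_cases d
  · simp [phiBlock, perZ_of_lt ht']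
  · simpa [phiBlock] using e1
  · simpa [phiBlock] using e2
  · simp [phiBlock, perZ_of_lt ht]

lemma length_phiBlock {S : List ℕ} (h : IsGood S) (p d : ℕ) :
    (phiBlock S p d).length = S.length := by
  have h1 := length_maxCyc h.ne_nil
  have h2 : maxCyc S ≠ [] := by
    rw [← List.length_pos_iff, h1]
    exact h.ext.pos
  unfold phiBlock
  split_ifs
  · exact h1
  · exact length_wminus h.ne_nil
  · rw [length_wplus h2, h1]
  · rfl

lemma length_phiAux {S : List ℕ} (h : IsGood S) (p : ℕ) (r : List ℕ) :
    (phiAux S p r).length = S.length * r.length := by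
  induction r generalizing p with
  | nil => simp [phiAux]
  | cons d r ih =>
    rw [phiAux, List.length_append, length_phiBlock h, ih, List.length_cons]
    ring

lemma getD_phiAux {S : List ℕ} (h : IsGood S) {p : ℕ} (hp : p ≤ 1) {r : List ℕ}
    (hr : ∀ d ∈ r, d ≤ 1) {ρ : ℕ → ℤ} (h0 : ρ 0 = p)
    (hρ : ∀ i < r.length, ρ (i + 1) = (r.getD i 0 : ℤ)) {n : ℕ} (hn : n < S.length * r.length) :
    ((phiAux S p r).getD n 0 : ℤ) = codeSeq S ρ n := by
  induction r generalizing p ρ n with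
  | nil => simp at hn
  | cons d r ih =>
    have hd : d ≤ 1 := hr d (by simp)
    have h1 : ρ 1 = d := by simpa using hρ 0 (by simp)
    rw [phiAux]
    rcases lt_or_ge n S.length with hlt | hge
    · rw [List.getD_append _ _ _ _ (by rwa [length_phiBlock h]), getD_phiBlock h hp hd hlt,
        codeSeq, blockSeq_apply_lt _ _ _ hlt, h0, h1]
    · rw [List.getD_append_right _ _ _ _ (by rwa [length_phiBlock h]), length_phiBlock h,
        ih hd (fun e he => hr e (by simp [he])) (ρ := shiftZ 1 ρ) (by simpa [shiftZ] using h1)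
          (fun i hi => by simpa [shiftZ] using hρ (i + 1) (by simpa using hi)) ?_]
      · have := congrFun (shiftZ_blockSeq h.ext.pos (perZ S) (perZ (maxCyc S)) ρ 1)
          (n - S.length)
        rw [mul_one] at this
        rw [codeSeq, ← this, shiftZ, Nat.sub_add_cancel hge]
        rfl
      · rw [List.length_cons, Nat.mul_succ] at hn
        omega

lemma IsBinGood.digit_le {r : List ℕ} (h : IsBinGood r) : ∀ d ∈ r, d ≤ 1 := by
  intro d hd
  obtain ⟨i, hi, rfl⟩ := List.mem_iff_getElem.1 hd
  have h1 := h.bin i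
  rw [perZ_of_lt hi, List.getD_eq_getElem _ _ hi] at h1
  omega

lemma IsBinGood.subst_eq {r : List ℕ} (h : IsBinGood r) (S : List ℕ) :
    subst S r = phiAux S 1 r := by
  rcases r with _ | ⟨d, r⟩
  · exact absurd rfl h.ne_nil
  · have h1 := h.first_zero
    rw [perZ_of_lt (by simp)] at h1
    have : d = 0 := by simpa using h1
    subst this
    rfl

lemma IsGood.length_subst {S r : List ℕ} (h : IsGood S) (hr : IsBinGood r) :
    (subst S r).length = S.length * r.length := by
  rw [hr.subst_eq, length_phiAux h]

lemma IsGood.perZ_subst {S r : List ℕ} (h : IsGood S) (hr : IsBinGood r) :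
    perZ (subst S r) = codeSeq S (consZ 1 (perZ r)) := by
  have hl := h.length_subst hr
  have hE := h.ext.blockSeq hr.ext hr.bin hr.max_bin hr.max_first hr.max_last hr.first_zero
    hr.last_one
  refine perZ_eq_of_period ?_ (fun i => ?_) (fun i hi => ?_)
  · rw [hl]
    exact hE.pos
  · rw [hl]
    exact hE.per_X i
  · rw [hr.subst_eq]
    refine getD_phiAux h le_rfl hr.digit_le (by simp) (fun j hj => ?_) (by omega)
    rw [consZ_succ, perZ_of_lt hj]

lemma IsGood.extremalPair_subst {S r : List ℕ} (h : IsGood S) (hr : IsBinGood r) :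
    ExtremalPair (subst S r).length (perZ (subst S r))
      (codeSeq S (consZ 0 (perZ (maxCyc r)))) := by
  rw [h.length_subst hr, h.perZ_subst hr]
  exact h.ext.blockSeq hr.ext hr.bin hr.max_bin hr.max_first hr.max_last hr.first_zero hr.last_one

lemma IsGood.perZ_maxCyc_subst {S r : List ℕ} (h : IsGood S) (hr : IsBinGood r) :
    perZ (maxCyc (subst S r)) = codeSeq S (consZ 0 (perZ (maxCyc r))) := by
  have hE := h.extremalPair_subst hr
  obtain ⟨k, hk⟩ := perZ_maxCyc_eq_shiftZ hr.ne_nil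
  refine perZ_maxCyc_eq (List.length_pos_iff.1 hE.pos) (k := S.length * k) ?_ hE.max_X
  have e1 : consZ 0 (perZ (maxCyc r)) = shiftZ (r.length - 1) (perZ (maxCyc r)) := by
    rw [← hr.max_last]
    exact consZ_eq_shiftZ hr.ext.pos hr.ext.per_Y
  have e2 : consZ 1 (perZ r) = shiftZ (r.length - 1) (perZ r) := by
    rw [← hr.last_one]
    exact consZ_eq_shiftZ hr.ext.pos hr.ext.per_X
  rw [h.perZ_subst hr, codeSeq, codeSeq, shiftZ_blockSeq h.ext.pos, e1, e2, hk, shiftZ_shiftZ,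
    shiftZ_shiftZ, add_comm]

lemma IsGood.subst {S r : List ℕ} (h : IsGood S) (hr : IsBinGood r) : IsGood (subst S r) := by
  have hE := h.extremalPair_subst hr
  have hl := h.length_subst hr
  refine ⟨List.length_pos_iff.1 hE.pos, by rwa [h.perZ_maxCyc_subst hr], ?_⟩
  have hm := h.ext.pos
  have hq := hr.ext.pos
  have e : S.length * r.length - 1 = S.length * (r.length - 1) + (S.length - 1) := by
    have : S.length * r.length = S.length * (r.length - 1) + S.length := by
      rw [← Nat.mul_succ, Nat.succ_eq_add_one, Nat.sub_add_cancel hq]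
    omega
  have hlast : consZ 1 (perZ r) (r.length - 1 + 1) = 1 := by
    rw [consZ_succ, hr.last_one]
  rw [hl, h.perZ_subst hr, e, codeSeq, blockSeq_apply _ _ _ _ (by omega), if_pos rfl, hlast]
  have h1 := h.last
  have h2 := perZ_nonneg (maxCyc S) (S.length - 1)
  rcases (hr.bin.consZ (Or.inr rfl) : IsBin (consZ 1 (perZ r))) (r.length - 1) with h3 | h3 <;>
    rw [h3] <;> simp <;> omega

lemma IsGood.le_max_subst {S r : List ℕ} (h : IsGood S) (hr : IsBinGood r) :
    perZ (maxCyc S) 0 ≤ perZ (maxCyc (_root_.subst S r)) 0 := by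
  have h1 : consZ 0 (perZ (maxCyc r)) 1 = 1 := hr.max_first
  rw [h.perZ_maxCyc_subst hr, codeSeq, blockSeq_apply_lt _ _ _ h.ext.pos, h1]
  simp only [consZ_zero]
  split_ifs <;> simp

/-- The digit sequence `L(S)⁺ S^∞`. -/
def upZ (S : List ℕ) : ℕ → ℤ := fun i => (wordSeq (wplus (maxCyc S)) (perSeq S) i : ℤ)

lemma maxCyc_ne_nil {S : List ℕ} (h : S ≠ []) : maxCyc S ≠ [] := by
  rw [← List.length_pos_iff, length_maxCyc h]
  exact List.length_pos_iff.2 h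

lemma upZ_apply {S : List ℕ} (h : S ≠ []) (n : ℕ) : upZ S n =
    if n < S.length then perZ (maxCyc S) n + (if n = S.length - 1 then 1 else 0) else perZ S n := by
  have hl := length_maxCyc h
  have hl' := length_wplus (maxCyc_ne_nil h)
  rw [upZ, wordSeq, hl', hl]
  split_ifs with h1 h2
  · rw [getD_wplus (by omega), hl, if_pos h2]
  · rw [getD_wplus (by omega), hl, if_neg h2]
  · change perZ S (n - S.length) = _
    rw [← perZ_period, Nat.sub_add_cancel (by omega)]

lemma IsGood.upZ_eq {S : List ℕ} (h : IsGood S) : upZ S = codeSeq S (consZ 0 fun _ => 1) := by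
  ext n
  rw [upZ_apply h.ne_nil]
  split_ifs with h1 h2
  · rw [codeSeq, blockSeq_apply_lt _ _ _ h1]
    simp [consZ, h2]
  · rw [codeSeq, blockSeq_apply_lt _ _ _ h1]
    simp [consZ, h2]
  · obtain ⟨l, hl⟩ : ∃ l, n / S.length = l + 1 :=
      ⟨n / S.length - 1, by have := Nat.div_pos (not_lt.1 h1) h.ext.pos; omega⟩
    simp [codeSeq, blockSeq, hl, perZ_mod]

/-- The digit sequence `L(S)⁺ S⁻ L(S)^∞`. -/
def starZ (S : List ℕ) : ℕ → ℤ :=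
  fun i => (wordSeq (wplus (maxCyc S) ++ wminus S) (perSeq (maxCyc S)) i : ℤ)

lemma IsGood.starZ_eq {S : List ℕ} (h : IsGood S) :
    starZ S = codeSeq S (consZ 0 (consZ 1 fun _ => 0)) := by
  ext n
  have hm := h.ext.pos
  have hl := length_maxCyc h.ne_nil
  have hl' := length_wplus (maxCyc_ne_nil h.ne_nil)
  have hl'' := length_wminus h.ne_nil
  have c0 : consZ 0 (consZ 1 fun _ => (0 : ℤ)) 0 = 0 := rfl
  have c1 : consZ 0 (consZ 1 fun _ => (0 : ℤ)) 1 = 1 := rfl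
  have c2 : ∀ l, consZ 0 (consZ 1 fun _ => (0 : ℤ)) (l + 2) = 0 := fun l => rfl
  rw [starZ, wordSeq, List.length_append, hl', hl, hl'']
  rcases lt_or_ge n S.length with h1 | h1
  · rw [if_pos (by omega), List.getD_append _ _ _ _ (by omega), getD_wplus (by omega), hl,
      codeSeq, blockSeq_apply_lt _ _ _ h1, c0, c1]
    simp
  · rcases lt_or_ge n (S.length + S.length) with h2 | h2
    · have h3 := blockSeq_apply (perZ S) (perZ (maxCyc S)) (consZ 0 (consZ 1 fun _ => (0 : ℤ))) 1
        (show n - S.length < S.length by omega)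
      rw [mul_one, Nat.add_sub_cancel' h1, c1, c2 0] at h3
      rw [if_pos h2, List.getD_append_right _ _ _ _ (by omega), hl', hl,
        getD_wminus h.last (by omega), codeSeq, h3]
      simp
    · obtain ⟨l, hl2⟩ : ∃ l, n / S.length = l + 2 := by
        have : 2 ≤ n / S.length := by
          rw [Nat.le_div_iff_mul_le hm]
          omega
        exact ⟨n / S.length - 2, by omega⟩
      rw [if_neg (by omega)]
      change perZ (maxCyc S) _ = _
      have e : perZ (maxCyc S) (n - (S.length + S.length)) = perZ (maxCyc S) n := by
        rw [← h.ext.per_Y, ← h.ext.per_Y, add_assoc, Nat.sub_add_cancel h2]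
      have e' := perZ_mod (maxCyc S) n
      rw [hl] at e'
      simp only [codeSeq, blockSeq, hl2, show l + 2 + 1 = (l + 1) + 2 by ring, c2, e, e']
      simp

lemma IsGood.upZ_subst {S r : List ℕ} (h : IsGood S) (hr : IsBinGood r) :
    upZ (_root_.subst S r) = codeSeq S (consZ 0 (upZ r)) := by
  ext n
  have hl := h.length_subst hr
  have hm := h.ext.pos
  have hq := hr.ext.pos
  rw [upZ_apply (h.subst hr).ne_nil, hl, h.perZ_maxCyc_subst hr, h.perZ_subst hr]
  have hdm := Nat.div_add_mod n S.length
  have hml := Nat.mod_lt n hm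
  have hstep : S.length * r.length = S.length * (r.length - 1) + S.length := by
    rw [← Nat.mul_succ, Nat.succ_eq_add_one, Nat.sub_add_cancel hq]
  have hup : ∀ i < r.length, i ≠ r.length - 1 → upZ r i = perZ (maxCyc r) i := fun i hi hne => by
    rw [upZ_apply hr.ne_nil, if_pos hi, if_neg hne, add_zero]
  have hcons : ∀ i, i < r.length → consZ 0 (upZ r) i = consZ 0 (perZ (maxCyc r)) i := by
    intro i hi
    rcases i with _ | i
    · rfl
    · rw [consZ_succ, consZ_succ, hup i (by omega) (by omega)]
  split_ifs with h1 h2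
  · have hi : n / S.length = r.length - 1 := by
      rw [h2, hstep, Nat.add_sub_assoc hm, Nat.mul_add_div hm, Nat.div_eq_of_lt (by omega),
        add_zero]
    have ht : n % S.length = S.length - 1 := by
      rw [h2, hstep, Nat.add_sub_assoc hm, Nat.mul_add_mod, Nat.mod_eq_of_lt (by omega)]
    have e1 := hcons (r.length - 1) (by omega)
    have e2 : upZ r (r.length - 1) = 1 := by
      rw [upZ_apply hr.ne_nil, if_pos (by omega), if_pos rfl, hr.max_last, zero_add]
    simp only [codeSeq, blockSeq, hi, ht, e1, consZ_succ, e2, hr.max_last, if_true]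
    ring
  · have hi : n / S.length < r.length := by
      rw [Nat.div_lt_iff_lt_mul hm, Nat.mul_comm]
      exact h1
    have e1 := hcons _ hi
    simp only [codeSeq, blockSeq, e1, consZ_succ, add_zero]
    by_cases ht : n % S.length = S.length - 1
    · have hne : n / S.length ≠ r.length - 1 := by
        intro hc
        rw [hc, ht] at hdm
        omega
      rw [hup _ hi hne]
    · simp only [ht, if_false]
  · have hi : r.length ≤ n / S.length := by
      rw [Nat.le_div_iff_mul_le hm, Nat.mul_comm]
      omega
    obtain ⟨l, hl2⟩ : ∃ l, n / S.length = l + 1 := ⟨n / S.length - 1, by omega⟩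
    have e1 : ∀ i, r.length - 1 ≤ i → upZ r i = perZ r i := fun i hi' => by
      rw [upZ_apply hr.ne_nil]
      split_ifs with h3 h4
      · rw [h4, hr.max_last, hr.last_one]
        rfl
      · omega
      · rfl
    simp only [codeSeq, blockSeq, hl2, consZ_succ]
    rw [e1 l (by omega), e1 (l + 1) (by omega)]

lemma IsGood.digit_bounds {S : List ℕ} (h : IsGood S) {ρ : ℕ → ℤ} (hρ : IsBin ρ) :
    (∀ i, 0 ≤ codeSeq S ρ i) ∧ ∀ i, (codeSeq S ρ i : ℝ) ≤ (perZ (maxCyc S) 0 : ℝ) + 1 :=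
  ⟨h.codeSeq_nonneg hρ, fun i => by exact_mod_cast h.codeSeq_le hρ i⟩

lemma isBin_const_one : IsBin fun _ => 1 := fun _ => Or.inr rfl

lemma isBin_const_zero : IsBin fun _ => 0 := fun _ => Or.inl rfl

lemma IsGood.one_le_codeSeq_zero {S : List ℕ} (h : IsGood S) {ρ : ℕ → ℤ} (hρ : IsBin ρ)
    (h0 : ρ 0 = 0) : 1 ≤ codeSeq S ρ 0 := by
  rw [codeSeq, blockSeq_apply_lt _ _ _ h.ext.pos, if_pos h0, h0]
  have := h.one_le_max
  rcases hρ 1 with h1 | h1 <;> rw [h1] <;> split_ifs <;> omega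

lemma IsGood.betaL_spec {S : List ℕ} (h : IsGood S) :
    1 < betaL S ∧ baseVal (betaL S) (perZ (maxCyc S)) = 1 := by
  have he : ∃ β : ℝ, 1 < β ∧ valSeq β (perSeq (maxCyc S)) = 1 := by
    obtain ⟨β, h1, h2⟩ := exists_base (D := (perZ (maxCyc S) 0 : ℝ)) (perZ_nonneg (maxCyc S))
      (fun i => by exact_mod_cast h.perZ_max_le i) h.one_le_max (j := 0 + S.length)
      (by have := h.ext.pos; omega) (by rw [h.ext.per_Y]; exact h.one_le_max)
    exact ⟨β, h1, by rw [← h2]; exact valSeq_eq_baseVal _ _ _ fun _ => rfl⟩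
  obtain ⟨h1, h2⟩ := Classical.epsilon_spec he
  exact ⟨h1, by rw [← h2]; exact (valSeq_eq_baseVal _ _ _ fun _ => rfl).symm⟩

lemma IsGood.betaR_spec {S : List ℕ} (h : IsGood S) :
    1 < betaR S ∧ baseVal (betaR S) (upZ S) = 1 := by
  have hb : IsBin (consZ 0 fun _ => 1) := isBin_const_one.consZ (Or.inl rfl)
  have hm := h.ext.pos
  have he : ∃ β : ℝ, 1 < β ∧ valSeq β (wordSeq (wplus (maxCyc S)) (perSeq S)) = 1 := by
    obtain ⟨h0, hD⟩ := h.digit_bounds hb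
    obtain ⟨β, h1, h2⟩ := exists_base h0 hD (h.one_le_codeSeq_zero hb rfl)
      (j := S.length * 1 + (S.length - 1)) (by omega) (by
        rw [codeSeq, blockSeq_apply _ _ _ _ (by omega)]
        simpa [consZ] using h.last)
    rw [← h.upZ_eq] at h2
    exact ⟨β, h1, by rw [← h2]; exact valSeq_eq_baseVal _ _ _ fun _ => rfl⟩
  obtain ⟨h1, h2⟩ := Classical.epsilon_spec he
  exact ⟨h1, by rw [← h2]; exact (valSeq_eq_baseVal _ _ _ fun _ => rfl).symm⟩

lemma IsGood.betaStar_spec {S : List ℕ} (h : IsGood S) :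
    1 < betaStar S ∧ baseVal (betaStar S) (starZ S) = 1 := by
  have hb : IsBin (consZ 0 (consZ 1 fun _ => 0)) :=
    (isBin_const_zero.consZ (Or.inr rfl)).consZ (Or.inl rfl)
  have hm := h.ext.pos
  have he : ∃ β : ℝ, 1 < β ∧
      valSeq β (wordSeq (wplus (maxCyc S) ++ wminus S) (perSeq (maxCyc S))) = 1 := by
    obtain ⟨h0, hD⟩ := h.digit_bounds hb
    obtain ⟨β, h1, h2⟩ := exists_base h0 hD (h.one_le_codeSeq_zero hb rfl)
      (j := S.length * 2 + 0) (by omega) (by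
        rw [codeSeq, blockSeq_apply _ _ _ _ (by omega)]
        simpa [consZ] using h.one_le_max)
    rw [← h.starZ_eq] at h2
    exact ⟨β, h1, by rw [← h2]; exact valSeq_eq_baseVal _ _ _ fun _ => rfl⟩
  obtain ⟨h1, h2⟩ := Classical.epsilon_spec he
  exact ⟨h1, by rw [← h2]; exact (valSeq_eq_baseVal _ _ _ fun _ => rfl).symm⟩

/-- The sequence of consecutive differences. -/
def diffZ (U : ℕ → ℤ) : ℕ → ℤ := fun i => U (i + 1) - U i

lemma shiftZ_diffZ (n : ℕ) (U : ℕ → ℤ) : shiftZ n (diffZ U) = diffZ (shiftZ n U) := by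
  ext i
  simp only [shiftZ, diffZ, add_right_comm]

lemma diffZ_partial_eq {U V : ℕ → ℤ} {n : ℕ} (h : ∀ i < n, diffZ U i = diffZ V i) :
    U n - U 0 = V n - V 0 := by
  induction n with
  | zero => simp
  | succ n ih =>
    have h1 := ih fun i hi => h i (by omega)
    have h2 := h n (by omega)
    simp only [diffZ] at h2
    omega

lemma toLex_diffZ_le {U V : ℕ → ℤ} (h : ∀ i, U i - U 0 ≤ V i - V 0) :
    toLex (diffZ U) ≤ toLex (diffZ V) := by
  by_contra hc
  obtain ⟨i, h1, h2⟩ := toLex_lt_iff.1 (not_le.1 hc)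
  have h3 := diffZ_partial_eq h1
  have h4 := h (i + 1)
  simp only [diffZ] at h2
  omega

/-- Lower approximations `⌊i p / q⌋` of a line of slope `p / q`. -/
def loSum (p q : ℕ) : ℕ → ℤ := fun i => (i * p / q : ℕ)

/-- Upper approximations `⌈i p / q⌉` of a line of slope `p / q`. -/
def hiSum (p q : ℕ) : ℕ → ℤ := fun i => ((i * p + (q - 1)) / q : ℕ)

/-- The sequence `0, 1 + ⌊p / q⌋, 1 + ⌊2 p / q⌋, …`. -/
def upSum (p q : ℕ) : ℕ → ℤ := fun i => if i = 0 then 0 else 1 + loSum p q i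

/-- The lower Christoffel word of slope `p / q`. -/
def christoffel (p q : ℕ) : List ℕ :=
  (List.range q).map fun i => (i + 1) * p / q - i * p / q

@[simp] lemma length_christoffel (p q : ℕ) : (christoffel p q).length = q := by
  simp [christoffel]

lemma christoffel_ne_nil {p q : ℕ} (hq : 1 ≤ q) : christoffel p q ≠ [] := by
  rw [← List.length_pos_iff, length_christoffel]
  exact hq

lemma loSum_mono (p q i : ℕ) : loSum p q i ≤ loSum p q (i + 1) := by
  simp only [loSum]
  exact_mod_cast Nat.div_le_div_right (Nat.mul_le_mul_right p (by omega))

lemma loSum_succ_le {p q : ℕ} (hq : 1 ≤ q) (hpq : p ≤ q) (i : ℕ) :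
    loSum p q (i + 1) ≤ loSum p q i + 1 := by
  simp only [loSum]
  have h : (i + 1) * p / q ≤ i * p / q + 1 := by
    rw [← Nat.add_div_right _ hq]
    exact Nat.div_le_div_right (by rw [add_mul]; omega)
  exact_mod_cast h

lemma loSum_zero (p q : ℕ) : loSum p q 0 = 0 := by simp [loSum]

lemma hiSum_zero {p q : ℕ} (hq : 1 ≤ q) : hiSum p q 0 = 0 := by
  simp only [hiSum, zero_mul, zero_add]
  rw [Nat.div_eq_of_lt (by omega)]
  rfl

lemma loSum_add_period {p q : ℕ} (hq : 1 ≤ q) (i : ℕ) : loSum p q (i + q) = loSum p q i + p := by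
  simp only [loSum]
  rw [add_mul, Nat.add_mul_div_left _ _ hq]
  push_cast
  rfl

lemma isBin_diffZ_loSum {p q : ℕ} (hq : 1 ≤ q) (hpq : p ≤ q) : IsBin (diffZ (loSum p q)) := by
  intro i
  have h1 := loSum_mono p q i
  have h2 := loSum_succ_le hq hpq i
  simp only [diffZ]
  omega

lemma diffZ_loSum_period {p q : ℕ} (hq : 1 ≤ q) (i : ℕ) :
    diffZ (loSum p q) (i + q) = diffZ (loSum p q) i := by
  simp only [diffZ]
  rw [add_right_comm, loSum_add_period hq, loSum_add_period hq]
  ring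

lemma getD_christoffel {p q i : ℕ} (hi : i < q) :
    ((christoffel p q).getD i 0 : ℤ) = diffZ (loSum p q) i := by
  have h := loSum_mono p q i
  simp only [loSum] at h
  rw [List.getD_eq_getElem _ _ (by simpa using hi)]
  simp only [christoffel, List.getElem_map, List.getElem_range, diffZ, loSum]
  exact Nat.cast_sub (by exact_mod_cast h)

lemma perZ_christoffel {p q : ℕ} (hq : 1 ≤ q) : perZ (christoffel p q) = diffZ (loSum p q) := by
  refine perZ_eq_of_period (by rwa [length_christoffel]) (fun i => ?_) (fun i hi => ?_)
  · rw [length_christoffel, diffZ_loSum_period hq]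
  · exact getD_christoffel (by simpa using hi)

lemma loSum_add_le (p q i n : ℕ) : loSum p q i + loSum p q n ≤ loSum p q (i + n) := by
  simp only [loSum]
  rw [add_mul]
  exact_mod_cast Nat.div_add_div_le_add_div

lemma loSum_add_le_hiSum {p q : ℕ} (hq : 1 ≤ q) (i n : ℕ) :
    loSum p q (i + n) ≤ hiSum p q i + loSum p q n := by
  simp only [loSum, hiSum]
  have h1 := Nat.div_add_mod (n * p) q
  have h2 := Nat.mod_lt (n * p) hq
  have h3 := Nat.div_add_mod (i * p + (q - 1)) q
  have h4 := Nat.mod_lt (i * p + (q - 1)) hq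
  have h : (i + n) * p / q < (i * p + (q - 1)) / q + n * p / q + 1 := by
    rw [Nat.div_lt_iff_lt_mul hq, add_mul, add_mul, add_mul, mul_comm (_ / q), mul_comm (_ / q)]
    omega
  exact_mod_cast Nat.lt_succ_iff.1 h

lemma exists_mul_add_one {p q : ℕ} (hq : 1 ≤ q) (hc : p.Coprime q) :
    ∃ k m, k * p + 1 = q * (m + 1) := by
  obtain ⟨k, hk⟩ := Nat.exists_mul_mod_eq_of_coprime (q - 1) hc (by omega)
  have h1 := Nat.div_add_mod (p * k) q
  have h2 : (q - 1) % q = q - 1 := Nat.mod_eq_of_lt (by omega)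
  refine ⟨k, p * k / q, ?_⟩
  rw [mul_comm k, Nat.mul_add, mul_one]
  omega

lemma hiSum_eq_loSum_add {p q k m : ℕ} (hq : 1 ≤ q) (hk : k * p + 1 = q * (m + 1)) (i : ℕ) :
    hiSum p q i + m = loSum p q (i + k) := by
  simp only [loSum, hiSum]
  have h : (i + k) * p = i * p + (q - 1) + q * m := by
    rw [Nat.mul_add] at hk
    rw [add_mul]
    omega
  rw [h, Nat.add_mul_div_left _ _ hq]
  push_cast
  rfl

lemma diffZ_hiSum {p q k m : ℕ} (hq : 1 ≤ q) (hk : k * p + 1 = q * (m + 1)) :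
    diffZ (hiSum p q) = shiftZ k (diffZ (loSum p q)) := by
  rw [shiftZ_diffZ]
  ext i
  simp only [diffZ, shiftZ]
  rw [← hiSum_eq_loSum_add hq hk, ← hiSum_eq_loSum_add hq hk]
  ring

lemma loSum_aperiodic {p q : ℕ} (hq : 1 ≤ q) (hc : p.Coprime q) {n : ℕ}
    (hn : shiftZ n (diffZ (loSum p q)) = diffZ (loSum p q)) : q ∣ n := by
  obtain ⟨k, m, hk⟩ := exists_mul_add_one hq hc
  rw [shiftZ_diffZ] at hn
  have h1 := diffZ_partial_eq (n := k) (fun i _ => congrFun hn i)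
  simp only [shiftZ, zero_add, loSum] at h1
  simp only [zero_mul, Nat.zero_div] at h1
  have h2 : k * p / q = m := by
    rw [Nat.div_eq_iff hq, mul_comm m]
    rw [Nat.mul_add] at hk
    omega
  rw [h2] at h1
  have h3 := Nat.div_add_mod (n * p) q
  rcases Nat.eq_zero_or_pos (n * p % q) with h4 | h4
  · exact (Nat.Coprime.symm hc).dvd_of_dvd_mul_right (Nat.dvd_of_mod_eq_zero h4)
  · exfalso
    have h5 : n * p / q + m + 1 ≤ (k + n) * p / q := by
      rw [Nat.le_div_iff_mul_le hq, add_mul, add_mul, add_mul k n p, mul_comm _ q, mul_comm _ q]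
      rw [Nat.mul_add] at hk
      omega
    omega

lemma extremalPair_christoffel {p q : ℕ} (hq : 1 ≤ q) (hc : p.Coprime q) :
    ExtremalPair q (diffZ (loSum p q)) (diffZ (hiSum p q)) := by
  obtain ⟨k, m, hk⟩ := exists_mul_add_one hq hc
  refine ExtremalPair.of_shift hq (diffZ_loSum_period hq) (diffZ_hiSum hq hk) (fun n => ?_)
    (fun n => ?_) (fun n hn => loSum_aperiodic hq hc hn)
  · rw [shiftZ_diffZ]
    refine toLex_diffZ_le fun i => ?_
    have := loSum_add_le p q i n
    simp only [shiftZ, zero_add, loSum_zero]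
    omega
  · rw [shiftZ_diffZ]
    refine toLex_diffZ_le fun i => ?_
    have := loSum_add_le_hiSum (p := p) hq i n
    simp only [shiftZ, zero_add, hiSum_zero hq]
    omega

lemma perZ_maxCyc_christoffel {p q : ℕ} (hq : 1 ≤ q) (hc : p.Coprime q) :
    perZ (maxCyc (christoffel p q)) = diffZ (hiSum p q) := by
  obtain ⟨k, m, hk⟩ := exists_mul_add_one hq hc
  refine perZ_maxCyc_eq (k := k) (christoffel_ne_nil hq) ?_ ?_
  · rw [perZ_christoffel hq, diffZ_hiSum hq hk]
  · rw [perZ_christoffel hq]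
    exact (extremalPair_christoffel hq hc).max_X

lemma loSum_period {p q : ℕ} (hq : 1 ≤ q) : loSum p q q = p := by
  simpa [loSum_zero] using loSum_add_period (p := p) hq 0

lemma isGood_christoffel {p q : ℕ} (hp : 1 ≤ p) (hpq : p ≤ q) (hc : p.Coprime q) :
    IsGood (christoffel p q) := by
  have hq : 1 ≤ q := hp.trans hpq
  refine ⟨christoffel_ne_nil hq, ?_, ?_⟩
  · rw [length_christoffel, perZ_christoffel hq, perZ_maxCyc_christoffel hq hc]
    exact extremalPair_christoffel hq hc
  · rw [length_christoffel, perZ_christoffel hq, diffZ, Nat.sub_add_cancel hq, loSum_period hq]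
    have h : (q - 1) * p / q < p := by
      rw [Nat.div_lt_iff_lt_mul hq, mul_comm p]
      exact Nat.mul_lt_mul_of_pos_right (by omega) hp
    simp only [loSum]
    omega

lemma hiSum_eq_loSum_add_one {p q i : ℕ} (hq : 1 ≤ q) (hi : ¬ q ∣ i * p) :
    hiSum p q i = 1 + loSum p q i := by
  have h1 := Nat.div_add_mod (i * p) q
  have h2 := Nat.mod_lt (i * p) hq
  have h3 : 0 < i * p % q := Nat.pos_of_ne_zero fun h => hi (Nat.dvd_of_mod_eq_zero h)
  simp only [hiSum, loSum]
  have : (i * p + (q - 1)) / q = 1 + i * p / q := by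
    rw [Nat.div_eq_iff hq, add_mul, one_mul, mul_comm _ q]
    omega
  rw [this]
  push_cast
  rfl

lemma hiSum_period {p q : ℕ} (hq : 1 ≤ q) : hiSum p q q = p := by
  simp only [hiSum]
  rw [Nat.mul_add_div hq, Nat.div_eq_of_lt (by omega), add_zero]

lemma not_dvd_mul_of_lt {p q i : ℕ} (hc : p.Coprime q) (hi : 1 ≤ i) (hiq : i < q) :
    ¬ q ∣ i * p := fun h => by
  have := Nat.le_of_dvd hi ((Nat.Coprime.symm hc).dvd_of_dvd_mul_right h)
  omega

lemma isBinGood_christoffel {p q : ℕ} (hp : 1 ≤ p) (hpq : p < q) (hc : p.Coprime q) :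
    IsBinGood (christoffel p q) := by
  have hq : 1 ≤ q := hp.trans hpq.le
  have hz : p / q = 0 := Nat.div_eq_of_lt hpq
  refine ⟨isGood_christoffel hp hpq.le hc, ?_, ?_, ?_, ?_⟩
  · rw [perZ_christoffel hq]
    exact isBin_diffZ_loSum hq hpq.le
  · rw [perZ_christoffel hq]
    simp [diffZ, loSum, hz]
  · rw [perZ_maxCyc_christoffel hq hc, diffZ, hiSum_zero hq,
      hiSum_eq_loSum_add_one hq (not_dvd_mul_of_lt hc (by omega) (by omega))]
    simp [loSum, hz]
  · rw [perZ_maxCyc_christoffel hq hc, length_christoffel, diffZ, Nat.sub_add_cancel hq,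
      hiSum_period hq, hiSum_eq_loSum_add_one hq (not_dvd_mul_of_lt hc (by omega) (by omega))]
    have h : (q - 1) * p / q = p - 1 := by
      rw [Nat.div_eq_iff hq, Nat.sub_mul, Nat.sub_mul, mul_comm p q]
      have := Nat.le_mul_of_pos_right q hp
      omega
    simp only [loSum, h]
    omega

lemma upZ_christoffel {p q : ℕ} (hp : 1 ≤ p) (hpq : p < q) (hc : p.Coprime q) :
    upZ (christoffel p q) = diffZ (upSum p q) := by
  have hq : 1 ≤ q := hp.trans hpq.le
  ext n
  rw [upZ_apply (christoffel_ne_nil hq), length_christoffel, perZ_maxCyc_christoffel hq hc,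
    perZ_christoffel hq]
  simp only [diffZ, upSum, Nat.succ_ne_zero, if_false]
  rcases Nat.eq_zero_or_pos n with rfl | hn
  · have h := hiSum_eq_loSum_add_one hq (not_dvd_mul_of_lt hc le_rfl (by omega))
    rw [if_pos (by omega), if_neg (by omega), zero_add, h, hiSum_zero hq]
    simp
  · rw [if_neg (by omega : n ≠ 0)]
    split_ifs with h1 h2
    · have h3 := hiSum_eq_loSum_add_one hq (not_dvd_mul_of_lt hc hn h1)
      obtain rfl : q = n + 1 := by omega
      rw [hiSum_period hq, loSum_period hq, h3]
      ring
    · rw [hiSum_eq_loSum_add_one hq (not_dvd_mul_of_lt hc hn h1),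
        hiSum_eq_loSum_add_one hq (not_dvd_mul_of_lt hc (by omega) (by omega))]
      ring
    · ring

/-- The upper sequence of a fraction and the lower-slope sequence of a Farey neighbour agree on a
long initial segment. -/
lemma upSum_eq_hiSum {p q p' q' i : ℕ} (hq : 1 ≤ q) (hq' : 1 ≤ q') (h : p' * q = p * q' + 1)
    (hi : i < q + q') : upSum p q i = hiSum p' q' i := by
  rcases Nat.eq_zero_or_pos i with rfl | h0
  · simp [upSum, hiSum_zero hq']
  · have h1 := Nat.div_add_mod (i * p) q
    have h2 := Nat.mod_lt (i * p) hq
    set k := i * p / q with hk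
    have e : i * p' * q = i * p * q' + i := by
      rw [mul_assoc, h]
      ring
    have hlow : q' * k < i * p' := by
      refine lt_of_mul_lt_mul_right (a := q) ?_ (by omega)
      rw [e, ← h1]
      nlinarith [Nat.zero_le (i * p % q * q')]
    have hupp : i * p' ≤ q' * (k + 1) := by
      by_contra hc
      have h3 : (q' * (k + 1) + 1) * q ≤ i * p' * q := Nat.mul_le_mul_right q (by omega)
      have h4 : (i * p + 1) * q' ≤ (q * (k + 1)) * q' :=
        Nat.mul_le_mul_right q' (by rw [Nat.mul_add]; omega)
      nlinarith
    have : (i * p' + (q' - 1)) / q' = k + 1 := by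
      rw [Nat.div_eq_iff hq', mul_comm _ q']
      rw [Nat.mul_add] at hupp ⊢
      omega
    simp only [upSum, hiSum, loSum, this, ← hk]
    rw [if_neg (by omega)]
    push_cast
    ring

lemma diffZ_upSum_eq {p q p' q' i : ℕ} (hq : 1 ≤ q) (hq' : 1 ≤ q') (h : p' * q = p * q' + 1)
    (hi : i < q + q' - 1) : diffZ (upSum p q) i = diffZ (hiSum p' q') i := by
  simp only [diffZ]
  rw [upSum_eq_hiSum hq hq' h (by omega), upSum_eq_hiSum hq hq' h (by omega)]

lemma loSum_mediant_left {p q p' q' i : ℕ} (hq : 1 ≤ q) (h : p' * q = p * q' + 1)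
    (hi : i ≤ q) (hq' : 1 ≤ q') : loSum (p + p') (q + q') i = loSum p q i := by
  have h1 := Nat.div_add_mod (i * p) q
  have h2 := Nat.mod_lt (i * p) hq
  simp only [loSum]
  set k := i * p / q with hk
  congr 1
  have e : i * (p + p') * q = i * p * (q + q') + i := by
    have : i * (p' * q) = i * (p * q' + 1) := by rw [h]
    linarith
  have hlow : k * (q + q') ≤ i * (p + p') := by
    refine le_of_mul_le_mul_right (a := q) ?_ (by omega)
    rw [e, ← h1]
    nlinarith [Nat.zero_le (i * p % q * (q + q'))]
  have hupp : i * (p + p') < (k + 1) * (q + q') := by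
    by_contra hc
    have h3 : ((k + 1) * (q + q')) * q ≤ i * (p + p') * q := Nat.mul_le_mul_right q (by omega)
    have h4 : (i * p + 1) * (q + q') ≤ (q * (k + 1)) * (q + q') :=
      Nat.mul_le_mul_right _ (by rw [Nat.mul_add]; omega)
    nlinarith
  exact Nat.div_eq_of_lt_le hlow hupp

lemma loSum_mediant_right {p q p' q' i : ℕ} (hq : 1 ≤ q) (hq' : 1 ≤ q') (h : p' * q = p * q' + 1)
    (hi : i ≤ q') : loSum (p + p') (q + q') (q + i) = p + loSum p' q' i := by
  have h1 := Nat.div_add_mod (i * p') q'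
  have h2 := Nat.mod_lt (i * p') hq'
  simp only [loSum]
  set k := i * p' / q' with hk
  have e : (q + i) * (p + p') * q' + i = i * p' * (q + q') + q' * (p * (q + q') + 1) := by
    have h3 : i * (p' * q) = i * (p * q' + 1) := by rw [h]
    have h4 : q' * (p' * q) = q' * (p * q' + 1) := by rw [h]
    linarith
  have hlow : (p + k) * (q + q') ≤ (q + i) * (p + p') := by
    refine le_of_mul_le_mul_right (a := q') ?_ (by omega)
    nlinarith [Nat.zero_le (i * p' % q' * (q + q')), Nat.zero_le i]
  have hupp : (q + i) * (p + p') < (p + k + 1) * (q + q') := by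
    refine lt_of_mul_lt_mul_right (a := q') ?_ (by omega)
    have h4 : (i * p' + 1) * (q + q') ≤ (q' * (k + 1)) * (q + q') :=
      Nat.mul_le_mul_right _ (by rw [Nat.mul_add]; omega)
    nlinarith
  rw [Nat.div_eq_of_lt_le hlow hupp]
  push_cast
  rfl

/-- Concatenating Farey neighbours gives the word of the mediant. -/
lemma christoffel_append {p q p' q' : ℕ} (hq : 1 ≤ q) (hq' : 1 ≤ q') (h : p' * q = p * q' + 1) :
    christoffel p q ++ christoffel p' q' = christoffel (p + p') (q + q') := by
  refine List.ext_getElem (by simp) fun i h1 h2 => ?_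
  have hi : i < q + q' := by simpa using h2
  have e := getD_christoffel (p := p + p') hi
  rw [List.getD_eq_getElem _ _ h2] at e
  zify
  rw [e, ← List.getD_eq_getElem _ 0 h1]
  rcases lt_or_ge i q with hlt | hge
  · rw [List.getD_append _ _ _ _ (by simpa using hlt), getD_christoffel hlt]
    simp only [diffZ]
    rw [loSum_mediant_left hq h (by omega) hq', loSum_mediant_left hq h (by omega) hq']
  · rw [List.getD_append_right _ _ _ _ (by simpa using hge), length_christoffel,
      getD_christoffel (by omega)]
    obtain ⟨j, rfl⟩ := Nat.exists_eq_add_of_le hge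
    simp only [diffZ, Nat.add_sub_cancel_left]
    rw [add_assoc, loSum_mediant_right hq hq' h (by omega),
      loSum_mediant_right hq hq' h (by omega)]
    ring

/-- Two words that are Christoffel words of Farey neighbours in `[0, 1]`. -/
def FareyPair (v w : List ℕ) : Prop :=
  ∃ p q p' q', 1 ≤ q ∧ 1 ≤ q' ∧ p ≤ q ∧ p' ≤ q' ∧ p' * q = p * q' + 1 ∧
    v = christoffel p q ∧ w = christoffel p' q'

lemma FareyPair.append {v w : List ℕ} (h : FareyPair v w) :
    FareyPair v (v ++ w) ∧ FareyPair (v ++ w) w := by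
  obtain ⟨p, q, p', q', hq, hq', hp, hp', hd, rfl, rfl⟩ := h
  rw [christoffel_append hq hq' hd]
  refine ⟨⟨p, q, p + p', q + q', hq, by omega, hp, by omega, ?_, rfl, rfl⟩,
    ⟨p + p', q + q', p', q', by omega, hq', by omega, hp', ?_, rfl, rfl⟩⟩ <;> linarith

lemma fareyInsert_cons (v : List ℕ) (l : List (List ℕ)) :
    ∃ l', fareyInsert (v :: l) = v :: l' := by
  rcases l with _ | ⟨w, l⟩
  · exact ⟨[], rfl⟩
  · exact ⟨_, rfl⟩

lemma isChain_fareyInsert {l : List (List ℕ)} (h : l.IsChain FareyPair) :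
    (fareyInsert l).IsChain FareyPair := by
  induction l with
  | nil => exact List.isChain_nil
  | cons v l ih =>
    rcases l with _ | ⟨w, l⟩
    · exact List.isChain_singleton _
    · rw [List.isChain_cons_cons] at h
      obtain ⟨l', hl'⟩ := fareyInsert_cons w l
      have h1 := ih h.2
      rw [fareyInsert]
      rw [hl'] at h1 ⊢
      exact List.isChain_cons_cons.2 ⟨h.1.append.1, List.isChain_cons_cons.2 ⟨h.1.append.2, h1⟩⟩

lemma isChain_fareyLevel (n : ℕ) : (fareyLevel n).IsChain FareyPair := by
  induction n with
  | zero =>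
    exact List.isChain_cons_cons.2 ⟨⟨0, 1, 1, 1, by simp, by simp, by simp, by simp, by simp,
      rfl, rfl⟩, List.isChain_singleton _⟩
  | succ n ih => exact isChain_fareyInsert ih

lemma coprime_of_neighbours {p q p' q' : ℕ} (h : p' * q = p * q' + 1) :
    p.Coprime q ∧ p'.Coprime q' := by
  constructor
  · have h1 : Nat.gcd p q ∣ p' * q := (Nat.gcd_dvd_right p q).mul_left p'
    rw [h] at h1
    exact Nat.dvd_one.1 ((Nat.dvd_add_right ((Nat.gcd_dvd_left p q).mul_right q')).1 h1)
  · have h1 : Nat.gcd p' q' ∣ p' * q := (Nat.gcd_dvd_left p' q').mul_right q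
    rw [h] at h1
    exact Nat.dvd_one.1 ((Nat.dvd_add_right ((Nat.gcd_dvd_right p' q').mul_left p)).1 h1)

/-- Every Farey word is a Christoffel word. -/
lemma exists_christoffel_of_mem_fareyLevel {n : ℕ} {w : List ℕ} (hw : w ∈ fareyLevel n) :
    ∃ p q, 1 ≤ q ∧ p ≤ q ∧ p.Coprime q ∧ w = christoffel p q := by
  have hmem : ∀ l : List (List ℕ), l.IsChain FareyPair →
      (∀ w ∈ l, ∃ p q, 1 ≤ q ∧ p ≤ q ∧ p.Coprime q ∧ w = christoffel p q) →
      ∀ w ∈ fareyInsert l, ∃ p q, 1 ≤ q ∧ p ≤ q ∧ p.Coprime q ∧ w = christoffel p q := by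
    intro l hl hP
    induction l with
    | nil => simp [fareyInsert]
    | cons v l ih =>
      rcases l with _ | ⟨u, l⟩
      · simpa [fareyInsert] using hP
      · rw [List.isChain_cons_cons] at hl
        intro w hw
        rw [fareyInsert] at hw
        rcases List.mem_cons.1 hw with rfl | hw
        · exact hP _ (by simp)
        rcases List.mem_cons.1 hw with rfl | hw
        · obtain ⟨p, q, p', q', hq, hq', hp, hp', hd, e, _⟩ := hl.1.append.2
          exact ⟨p, q, hq, hp, (coprime_of_neighbours hd).1, e⟩
        · exact ih hl.2 (fun x hx => hP x (List.mem_cons_of_mem _ hx)) w hw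
  induction n generalizing w with
  | zero =>
    simp only [fareyLevel, List.mem_cons, List.not_mem_nil, or_false] at hw
    rcases hw with rfl | rfl
    · exact ⟨0, 1, by simp, by simp, by simp, rfl⟩
    · exact ⟨1, 1, by simp, by simp, by simp, rfl⟩
  | succ n ih => exact hmem _ (isChain_fareyLevel n) (fun w hw => ih hw) w hw

lemma exists_christoffel_of_mem_FareySet {w : List ℕ} (hw : w ∈ FareySet) :
    ∃ p q, 1 ≤ p ∧ p < q ∧ p.Coprime q ∧ w = christoffel p q := by
  obtain ⟨⟨n, hn⟩, h0, h1⟩ := hw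
  obtain ⟨p, q, hq, hpq, hc, rfl⟩ := exists_christoffel_of_mem_fareyLevel hn
  refine ⟨p, q, ?_, ?_, hc, rfl⟩
  · by_contra h
    obtain rfl : p = 0 := by omega
    obtain rfl : q = 1 := by simpa using hc
    exact h0 rfl
  · by_contra h
    obtain rfl : p = q := by omega
    obtain rfl : p = 1 := by simpa using hc
    exact h1 rfl

lemma isBinGood_of_mem_FareySet {w : List ℕ} (hw : w ∈ FareySet) : IsBinGood w := by
  obtain ⟨p, q, hp, hpq, hc, rfl⟩ := exists_christoffel_of_mem_FareySet hw
  exact isBinGood_christoffel hp hpq hc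

/-- Consecutive words on some Farey level, recorded by their slopes. -/
structure FareyAdj (p q p' q' : ℕ) : Prop where
  pos : 1 ≤ q
  pos' : 1 ≤ q'
  le : p ≤ q
  le' : p' ≤ q'
  det : p' * q = p * q' + 1
  level : ∃ n l₁ l₂, fareyLevel n = l₁ ++ christoffel p q :: christoffel p' q' :: l₂

lemma fareyAdj_base : FareyAdj 0 1 1 1 :=
  ⟨by simp, by simp, by simp, by simp, by simp, 0, [], [], rfl⟩

lemma fareyInsert_append (l₁ : List (List ℕ)) (v w : List ℕ) (l₂ : List (List ℕ)) :
    ∃ l l', fareyInsert (l₁ ++ v :: w :: l₂) = l ++ v :: (v ++ w) :: w :: l' := by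
  induction l₁ with
  | nil =>
    obtain ⟨l', hl'⟩ := fareyInsert_cons w l₂
    exact ⟨[], l', by rw [List.nil_append, fareyInsert, hl']; rfl⟩
  | cons u l₁ ih =>
    obtain ⟨l, l', h⟩ := ih
    rcases l₁ with _ | ⟨u', l₁⟩
    · refine ⟨u :: (u ++ v) :: l, l', ?_⟩
      rw [List.nil_append] at h
      rw [List.cons_append, List.nil_append, fareyInsert, h]
      rfl
    · refine ⟨u :: (u ++ u') :: l, l', ?_⟩
      rw [List.cons_append] at h
      rw [List.cons_append, List.cons_append, fareyInsert, h]
      rfl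

lemma FareyAdj.mediant {p q p' q' : ℕ} (h : FareyAdj p q p' q') :
    FareyAdj p q (p + p') (q + q') ∧ FareyAdj (p + p') (q + q') p' q' := by
  obtain ⟨hq, hq', hp, hp', hd, n, l₁, l₂, hl⟩ := h
  obtain ⟨l, l', h1⟩ := fareyInsert_append l₁ (christoffel p q) (christoffel p' q') l₂
  rw [← hl, christoffel_append hq hq' hd] at h1
  exact ⟨⟨hq, by omega, hp, by omega, by linarith, n + 1, _, _, h1⟩,
    ⟨by omega, hq', by omega, hp', by linarith, n + 1,
      l ++ [christoffel p q], l', by rw [fareyLevel, h1]; simp⟩⟩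

lemma FareyAdj.mem_FareySet {p q p' q' : ℕ} (h : FareyAdj p q p' q') :
    christoffel (p + p') (q + q') ∈ FareySet := by
  obtain ⟨n, l₁, l₂, hl⟩ := h.mediant.1.level
  have h1 := h.pos
  have h2 := h.pos'
  refine ⟨⟨n, by rw [hl]; simp⟩, fun hc => ?_, fun hc => ?_⟩ <;>
  · have := congrArg List.length hc
    simp at this
    omega

lemma FareyAdj.lt {p q p' q' : ℕ} (h : FareyAdj p q p' q') : p < q := by
  have h1 := h.det
  have h2 := h.pos
  by_contra hc
  have h3 : q * p' ≤ p * q' := Nat.mul_le_mul (by omega) h.le'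
  rw [mul_comm] at h3
  omega

lemma FareyAdj.one_le {p q p' q' : ℕ} (h : FareyAdj p q p' q') : 1 ≤ p' := by
  have h1 := h.det
  by_contra hc
  obtain rfl : p' = 0 := by omega
  omega

lemma diffZ_upSum_zero {p q : ℕ} (hpq : p < q) : diffZ (upSum p q) 0 = 1 := by
  simp [diffZ, upSum, loSum, Nat.div_eq_of_lt hpq]

lemma isBin_diffZ_upSum {p q : ℕ} (hpq : p < q) : IsBin (diffZ (upSum p q)) := by
  intro i
  rcases Nat.eq_zero_or_pos i with rfl | hi
  · exact Or.inr (diffZ_upSum_zero hpq)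
  · have h := isBin_diffZ_loSum (by omega) hpq.le i
    simp only [diffZ, upSum, if_neg (by omega : i ≠ 0), Nat.succ_ne_zero, if_false] at h ⊢
    omega

lemma isBin_diffZ_hiSum {p q : ℕ} (hq : 1 ≤ q) (hpq : p ≤ q) (hc : p.Coprime q) :
    IsBin (diffZ (hiSum p q)) := by
  obtain ⟨k, m, hk⟩ := exists_mul_add_one hq hc
  rw [diffZ_hiSum hq hk]
  exact (isBin_diffZ_loSum hq hpq).shiftZ k

/-- Descending the Farey tree to neighbours whose denominators sum to more than `N`. -/
lemma exists_fareyAdj {r l : ℕ → ℕ → ℝ} {x : ℝ} (hr : r 0 1 ≤ x) (hl : x ≤ l 1 1)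
    (hx : ∀ p q, christoffel p q ∈ FareySet → x < l p q ∨ r p q < x) {N : ℕ} (hN : 1 ≤ N) :
    ∃ p q p' q', FareyAdj p q p' q' ∧ q ≤ N ∧ N < q + q' ∧ r p q ≤ x ∧ x ≤ l p' q' := by
  have key : ∀ m : ℕ, ∃ p q p' q', FareyAdj p q p' q' ∧ q ≤ N ∧ q' ≤ N ∧
      (N < q + q' ∨ m ≤ q + q') ∧ r p q ≤ x ∧ x ≤ l p' q' := by
    intro m
    induction m with
    | zero => exact ⟨0, 1, 1, 1, fareyAdj_base, hN, hN, Or.inr (Nat.zero_le _), hr, hl⟩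
    | succ m ih =>
      obtain ⟨p, q, p', q', h, hq, hq', hm, hr', hl'⟩ := ih
      by_cases hlt : N < q + q'
      · exact ⟨p, q, p', q', h, hq, hq', Or.inl hlt, hr', hl'⟩
      · have h1 := h.pos
        have h2 := h.pos'
        rcases hx _ _ h.mem_FareySet with h3 | h3
        · exact ⟨_, _, _, _, h.mediant.1, hq, by omega, Or.inr (by omega), hr', h3.le⟩
        · exact ⟨_, _, _, _, h.mediant.2, by omega, hq', Or.inr (by omega), h3.le, hl'⟩
  obtain ⟨p, q, p', q', h, hq, hq', hm, hr', hl'⟩ := key (N + 1)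
  exact ⟨p, q, p', q', h, hq, by omega, hr', hl'⟩

/-- The points left over after removing the intervals `[l p q, r p q]` attached to the Farey
words form a set of box dimension zero, when the endpoints are the bases of codings of the
sequences of slope `p / q`. -/
lemma hasBoxDimZero_of_farey_gaps {G : Set ℝ} {T : (ℕ → ℤ) → ℕ → ℤ} {r l : ℕ → ℕ → ℝ} {δ D : ℝ}
    (hδ : 0 < δ)
    (hT : ∀ c d : ℕ → ℤ, ∀ n : ℕ, (∀ i < n, c i = d i) → ∀ i < n, T c i = T d i)
    (hT0 : ∀ c, IsBin c → ∀ i, 0 ≤ T c i) (hTD : ∀ c, IsBin c → ∀ i, (T c i : ℝ) ≤ D)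
    (hT1 : ∀ c, IsBin c → c 0 = 1 → 1 ≤ T c 0)
    (hr : ∀ p q, p < q → p.Coprime q → 1 ≤ r p q ∧
      (Summable fun i : ℕ => (T (diffZ (upSum p q)) i : ℝ) / r p q ^ (i + 1)) ∧
      baseVal (r p q) (T (diffZ (upSum p q))) = 1)
    (hl : ∀ p q, 1 ≤ p → p ≤ q → p.Coprime q → baseVal (l p q) (T (diffZ (hiSum p q))) = 1)
    (hG : ∀ x ∈ G, 1 + δ ≤ x ∧ r 0 1 ≤ x ∧ x ≤ l 1 1 ∧
      ∀ p q, christoffel p q ∈ FareySet → x < l p q ∨ r p q < x) : HasBoxDimZero G := by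
  have hD1 : 1 ≤ D := by
    refine le_trans ?_ (hTD (fun _ => 1) isBin_const_one 0)
    exact_mod_cast hT1 _ isBin_const_one rfl
  have hν0 : 0 < (1 + δ)⁻¹ := by positivity
  have hν1 : (1 + δ)⁻¹ < 1 := inv_lt_one_of_one_lt₀ (by linarith)
  have hK0 : 0 ≤ (D + 1) ^ 2 * (D / δ) := by positivity
  refine hasBoxDimZero_of_cover (K := (D + 1) ^ 2 * (D / δ) + 1) hν0 hν1 (by positivity) 2
    fun N => ?_
  refine ⟨(Finset.range (N + 1) ×ˢ Finset.range (N + 1)).image fun a => r a.1 (a.2 + 1), ?_, ?_⟩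
  · refine Finset.card_image_le.trans ?_
    rw [Finset.card_product, Finset.card_range, sq]
  · intro x hx
    obtain ⟨h1, h2, h3, h4⟩ := hG x hx
    obtain ⟨p, q, p', q', h, hq, hN, hrx, hxl⟩ := exists_fareyAdj h2 h3 h4 (N := N + 1) (by omega)
    obtain ⟨hc, hc'⟩ := coprime_of_neighbours h.det
    have hq1 := h.pos
    have hpq := h.lt
    obtain ⟨hr1, hrs, hrv⟩ := hr p q hpq hc
    have hA := isBin_diffZ_upSum hpq
    have hB := isBin_diffZ_hiSum h.pos' h.le' hc'
    have hgap := base_gap_le hδ hr1 (h1.trans hxl) (hrx.trans hxl) (hT0 _ hA) (hTD _ hA) (hT0 _ hB)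
      (hTD _ hB) (hT1 _ hA (diffZ_upSum_zero hpq))
      (hT _ _ _ fun i hi => diffZ_upSum_eq hq1 h.pos' h.det hi) hrs hrv
      (hl p' q' h.one_le h.le' hc')
    refine mem_iUnion₂.2 ⟨r p q, ?_, ?_⟩
    · refine Finset.mem_image.2 ⟨(p, q - 1), ?_, by rw [Nat.sub_add_cancel hq1]⟩
      simp only [Finset.mem_product, Finset.mem_range]
      omega
    · rw [Metric.mem_ball, Real.dist_eq, abs_of_nonneg (by linarith)]
      have hpow : (1 + δ)⁻¹ ^ (q + q' - 1) ≤ (1 + δ)⁻¹ ^ N :=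
        pow_le_pow_of_le_one hν0.le hν1.le (by omega)
      have hpos : 0 < (1 + δ)⁻¹ ^ N := by positivity
      have := mul_le_mul_of_nonneg_left hpow hK0
      linarith

lemma theta_iterate (k : ℕ) (w : List ℕ) : theta^[k] w = w.map (· + k) := by
  induction k with
  | zero => simp
  | succ k ih =>
    rw [Function.iterate_succ_apply', ih, theta, List.map_map]
    rfl

lemma length_theta_iterate (k : ℕ) (w : List ℕ) : (theta^[k] w).length = w.length := by
  simp [theta_iterate]

lemma theta_iterate_ne_nil {w : List ℕ} (hw : w ≠ []) (k : ℕ) : theta^[k] w ≠ [] := by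
  simpa [theta_iterate] using hw

lemma perZ_theta_iterate {w : List ℕ} (hw : w ≠ []) (k : ℕ) :
    perZ (theta^[k] w) = fun i => (k : ℤ) + perZ w i := by
  have hpos := List.length_pos_iff.2 hw
  refine perZ_eq_of_period (by rwa [length_theta_iterate]) (fun i => ?_) (fun i hi => ?_)
  · rw [length_theta_iterate, perZ_period]
  · rw [length_theta_iterate] at hi
    rw [perZ_of_lt hi, theta_iterate, List.getD_eq_getElem _ _ (by simpa using hi),
      List.getD_eq_getElem _ _ hi]
    simp [add_comm]

lemma perZ_maxCyc_theta_iterate {w : List ℕ} (hw : w ≠ []) (k : ℕ) :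
    perZ (maxCyc (theta^[k] w)) = fun i => (k : ℤ) + perZ (maxCyc w) i := by
  obtain ⟨n, hn⟩ := perZ_maxCyc_eq_shiftZ hw
  refine perZ_maxCyc_eq (k := n) (theta_iterate_ne_nil hw k) ?_ fun m => ?_
  · rw [perZ_theta_iterate hw, hn]
    rfl
  · rw [perZ_theta_iterate hw]
    exact toLex_const_add (k : ℤ) (shiftZ_le_perZ_maxCyc hw m)

lemma upZ_theta_iterate {w : List ℕ} (hw : w ≠ []) (k : ℕ) :
    upZ (theta^[k] w) = fun i => (k : ℤ) + upZ w i := by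
  ext i
  rw [upZ_apply (theta_iterate_ne_nil hw k), upZ_apply hw, length_theta_iterate,
    perZ_maxCyc_theta_iterate hw, perZ_theta_iterate hw]
  split_ifs <;> ring

lemma IsGood.theta_iterate {w : List ℕ} (h : IsGood w) (k : ℕ) : IsGood (theta^[k] w) := by
  refine ⟨theta_iterate_ne_nil h.ne_nil k, ?_, ?_⟩
  · rw [length_theta_iterate, perZ_theta_iterate h.ne_nil, perZ_maxCyc_theta_iterate h.ne_nil]
    exact h.ext.const_add k
  · rw [length_theta_iterate, perZ_theta_iterate h.ne_nil]
    have := h.last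
    dsimp only
    omega

lemma christoffel_one_one : christoffel 1 1 = [1] := rfl

lemma exists_christoffel_of_mem_FareyHat {w : List ℕ} (hw : w ∈ FareyHat) :
    ∃ p q, 1 ≤ p ∧ p ≤ q ∧ p.Coprime q ∧ w = christoffel p q := by
  rcases hw with hw | hw
  · obtain ⟨p, q, hp, hpq, hc, e⟩ := exists_christoffel_of_mem_FareySet hw
    exact ⟨p, q, hp, hpq.le, hc, e⟩
  · exact ⟨1, 1, le_rfl, le_rfl, by simp, hw⟩

lemma isGood_of_mem_FareyExt {w : List ℕ} (hw : w ∈ FareyExt) : IsGood w := by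
  obtain ⟨v, hv, k, rfl⟩ := hw
  obtain ⟨p, q, hp, hpq, hc, rfl⟩ := exists_christoffel_of_mem_FareyHat hv
  exact (isGood_christoffel hp hpq hc).theta_iterate k

lemma IsGood.foldl_subst {s : List ℕ} (h : IsGood s) {rs : List (List ℕ)}
    (hrs : ∀ r ∈ rs, r ∈ FareySet) : IsGood (rs.foldl _root_.subst s) := by
  induction rs generalizing s with
  | nil => exact h
  | cons r rs ih =>
    exact ih (h.subst (isBinGood_of_mem_FareySet (hrs r (by simp))))
      fun r' hr' => hrs r' (by simp [hr'])

lemma isGood_of_mem_LambdaE {m : ℕ} {S : List ℕ} (hS : S ∈ LambdaE m) : IsGood S := by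
  obtain ⟨s, hs, rs, _, hrs, rfl⟩ := hS
  exact (isGood_of_mem_FareyExt hs).foldl_subst hrs

lemma diffZ_upSum_zero_one : diffZ (upSum 0 1) = consZ 1 fun _ => 0 := by
  ext i
  rcases i with _ | i <;> simp [diffZ, upSum, loSum, consZ]

lemma diffZ_hiSum_one_one : diffZ (hiSum 1 1) = fun _ => 1 := by
  ext i
  simp [diffZ, hiSum]

lemma codeSeq_congr {S : List ℕ} {c d : ℕ → ℤ} {n : ℕ} (h : ∀ i < n, c i = d i) :
    ∀ i < n, codeSeq S (consZ 0 c) i = codeSeq S (consZ 0 d) i := by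
  intro i hi
  have h1 : i / S.length < n := (Nat.div_le_self _ _).trans_lt hi
  have h2 : consZ 0 c (i / S.length) = consZ 0 d (i / S.length) := by
    rcases hj : i / S.length with _ | j
    · rfl
    · rw [consZ_succ, consZ_succ, h j (by omega)]
  simp only [codeSeq, blockSeq, consZ_succ, h _ h1, h2]

lemma ne_of_christoffel_mem_FareySet {p q : ℕ} (h : christoffel p q ∈ FareySet) :
    p ≠ 0 ∧ q ≠ 1 := by
  have hg := isBinGood_of_mem_FareySet h
  have h1 := hg.last
  rw [length_christoffel] at h1
  constructor
  · rintro rfl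
    rcases Nat.eq_zero_or_pos q with rfl | hq
    · exact hg.ne_nil rfl
    · rw [perZ_christoffel hq] at h1
      simp [diffZ, loSum] at h1
  · rintro rfl
    have h2 := hg.first_zero
    rw [Nat.sub_self] at h1
    omega

/-- The relative exceptional set of a good word has box dimension zero. -/
lemma IsGood.hasBoxDimZero_EexcRel {S : List ℕ} (h : IsGood S) : HasBoxDimZero (EexcRel S) := by
  have hbin : ∀ {c : ℕ → ℤ}, IsBin c → IsBin (consZ 0 c) := fun hc => hc.consZ (Or.inl rfl)
  refine hasBoxDimZero_of_farey_gaps (T := fun c => codeSeq S (consZ 0 c))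
    (r := fun p q => if p = 0 then betaStar S else betaR (_root_.subst S (christoffel p q)))
    (l := fun p q => if q = 1 then betaR S else betaL (_root_.subst S (christoffel p q)))
    (δ := betaStar S - 1) (D := (perZ (maxCyc S) 0 : ℝ) + 1) (by linarith [h.betaStar_spec.1])
    (fun c d n hcd => codeSeq_congr hcd) (fun c hc => (h.digit_bounds (hbin hc)).1)
    (fun c hc => (h.digit_bounds (hbin hc)).2)
    (fun c hc _ => h.one_le_codeSeq_zero (hbin hc) rfl) (fun p q hpq hc => ?_)
    (fun p q hp hpq hc => ?_) (fun x hx => ?_)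
  · have hd := h.digit_bounds (hbin (isBin_diffZ_upSum hpq))
    suffices h1 : 1 < (if p = 0 then betaStar S else betaR (_root_.subst S (christoffel p q))) ∧
        baseVal (if p = 0 then betaStar S else betaR (_root_.subst S (christoffel p q)))
          (codeSeq S (consZ 0 (diffZ (upSum p q)))) = 1 from
      ⟨h1.1.le, summable_digits h1.1 hd.1 hd.2, h1.2⟩
    split_ifs with hp
    · subst hp
      obtain rfl : q = 1 := by simpa using hc
      rw [diffZ_upSum_zero_one, ← h.starZ_eq]
      exact h.betaStar_spec
    · have hg := isBinGood_christoffel (by omega) hpq hc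
      rw [← upZ_christoffel (by omega) hpq hc, ← h.upZ_subst hg]
      exact (h.subst hg).betaR_spec
  · split_ifs with hq
    · obtain rfl : p = 1 := by omega
      subst hq
      rw [diffZ_hiSum_one_one, ← h.upZ_eq]
      exact h.betaR_spec.2
    · have hlt : p < q := lt_of_le_of_ne hpq fun e => hq (by subst e; simpa using hc)
      have hg := isBinGood_christoffel hp hlt hc
      rw [← perZ_maxCyc_christoffel (by omega) hc, ← h.perZ_maxCyc_subst hg]
      exact (h.subst hg).betaL_spec.2
  · obtain ⟨⟨h1, h2⟩, h3⟩ := hx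
    have h4 : betaStar S < x := by
      by_contra hc
      exact h2 ⟨h1.1, not_lt.1 hc⟩
    refine ⟨by linarith, by simpa using h4.le, by simpa using h1.2, fun p q hpq => ?_⟩
    obtain ⟨hp, hq⟩ := ne_of_christoffel_mem_FareySet hpq
    simp only [hp, hq, if_false]
    by_contra hc
    push Not at hc
    exact h3 (mem_iUnion₂.2 ⟨_, hpq, hc.1, hc.2⟩)

/-- The part of the exceptional set in `(k + 1, k + 2]` that stays away from `1`. -/
def excPiece (k : ℕ) (δ : ℝ) : Set ℝ := {x ∈ Eexc | (k : ℝ) + 1 < x ∧ x ≤ k + 2 ∧ 1 + δ ≤ x}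

lemma singleton_eq_theta_iterate (k : ℕ) : [k + 1] = theta^[k] [1] := by
  simp [theta_iterate, add_comm]

lemma singleton_mem_FareyExt (k : ℕ) : [k + 1] ∈ FareyExt :=
  ⟨[1], Or.inr rfl, k, singleton_eq_theta_iterate k⟩

lemma baseVal_const {β : ℝ} (hβ : 1 < β) (d : ℤ) : baseVal β (fun _ => d) = d / (β - 1) :=
  (hasSum_const_div_pow hβ).tsum_eq

lemma perZ_maxCyc_one : perZ (maxCyc [1]) = fun _ => 1 := by
  rw [← christoffel_one_one, perZ_maxCyc_christoffel le_rfl (by simp), diffZ_hiSum_one_one]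

lemma betaL_singleton (k : ℕ) : betaL [k + 1] = k + 2 := by
  obtain ⟨h1, h2⟩ := (isGood_of_mem_FareyExt (singleton_mem_FareyExt k)).betaL_spec
  have e : perZ (maxCyc [k + 1]) = fun _ => ((k + 1 : ℕ) : ℤ) := by
    rw [singleton_eq_theta_iterate, perZ_maxCyc_theta_iterate (by simp), perZ_maxCyc_one]
    simp
  rw [e, baseVal_const h1, div_eq_one_iff_eq (by linarith)] at h2
  push_cast at h2
  linarith

lemma upZ_singleton (k : ℕ) :
    upZ [k + 1] = fun i => ((k + 1 : ℕ) : ℤ) + diffZ (upSum 0 1) i := by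
  rw [singleton_eq_theta_iterate, upZ_theta_iterate (by simp), diffZ_upSum_zero_one]
  ext i
  rw [upZ_apply (by simp), perZ_maxCyc_one, ← christoffel_one_one, perZ_christoffel le_rfl]
  rcases i with _ | i <;> simp [diffZ, loSum, consZ]
  ring

lemma hasBoxDimZero_excPiece (k : ℕ) {δ : ℝ} (hδ : 0 < δ) : HasBoxDimZero (excPiece k δ) := by
  have hmem : ∀ p q, christoffel p q ∈ FareySet → theta^[k] (christoffel p q) ∈ FareyExt :=
    fun p q h => ⟨_, Or.inl h, k, rfl⟩
  have hD : ∀ c : ℕ → ℤ, IsBin c → ∀ i, (((k : ℤ) + c i : ℤ) : ℝ) ≤ k + 1 := fun c hc i => by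
    have : (k : ℤ) + c i ≤ k + 1 := by rcases hc i with h | h <;> omega
    exact_mod_cast this
  have h0 : ∀ c : ℕ → ℤ, IsBin c → ∀ i, 0 ≤ (k : ℤ) + c i := fun c hc i => by
    rcases hc i with h | h <;> omega
  refine hasBoxDimZero_of_farey_gaps (T := fun c i => (k : ℤ) + c i)
    (r := fun p q => if p = 0 then (if k = 0 then 1 else betaR [k])
      else betaR (theta^[k] (christoffel p q)))
    (l := fun p q => if q = 1 then (k : ℝ) + 2 else betaL (theta^[k] (christoffel p q)))
    (D := k + 1) hδ (fun c d n hcd i hi => by rw [hcd i hi]) h0 hD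
    (fun c _ hc => by rw [hc]; omega) (fun p q hpq hc => ?_) (fun p q hp hpq hc => ?_)
    (fun x hx => ?_)
  · have hbin := isBin_diffZ_upSum hpq
    rcases Nat.eq_zero_or_pos p with rfl | hp
    · obtain rfl : q = 1 := by simpa using hc
      rcases k with _ | k
      · have e : (fun i : ℕ => (((0 : ℕ) + diffZ (upSum 0 1) i : ℤ) : ℝ) / 1 ^ (i + 1)) =
            fun i : ℕ => if i = 0 then (1 : ℝ) else 0 := by
          ext i
          rw [diffZ_upSum_zero_one]
          rcases i with _ | i <;> simp
        have hs := hasSum_ite_eq (0 : ℕ) (1 : ℝ)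
        simp only [if_true]
        refine ⟨le_rfl, by rw [e]; exact hs.summable, ?_⟩
        rw [baseVal, e]
        exact hs.tsum_eq
      · simp only [if_true, Nat.succ_ne_zero, if_false]
        obtain ⟨h1, h2⟩ := (isGood_of_mem_FareyExt (singleton_mem_FareyExt k)).betaR_spec
        rw [upZ_singleton] at h2
        exact ⟨h1.le, summable_digits h1 (h0 _ hbin) (hD _ hbin), h2⟩
    · have hg := isBinGood_christoffel hp hpq hc
      obtain ⟨h1, h2⟩ := (hg.toIsGood.theta_iterate k).betaR_spec
      rw [upZ_theta_iterate hg.ne_nil, upZ_christoffel hp hpq hc] at h2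
      simp only [hp.ne', if_false]
      exact ⟨h1.le, summable_digits h1 (h0 _ hbin) (hD _ hbin), h2⟩
  · split_ifs with hq
    · obtain rfl : p = 1 := by omega
      subst hq
      have hk : (0 : ℝ) ≤ k := k.cast_nonneg
      rw [diffZ_hiSum_one_one, baseVal_const (by linarith), div_eq_one_iff_eq (by linarith)]
      push_cast
      ring
    · have hg := isGood_christoffel hp hpq hc
      have h2 := (hg.theta_iterate k).betaL_spec.2
      rwa [perZ_maxCyc_theta_iterate hg.ne_nil, perZ_maxCyc_christoffel (by omega) hc] at h2
  · obtain ⟨⟨_, hx1⟩, hx2, hx3, hx4⟩ := hx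
    simp only [mem_iUnion, not_exists] at hx1
    refine ⟨hx4, ?_, by simpa using hx3, fun p q hpq => ?_⟩
    · rcases k with _ | k
      · simp only [if_true]
        linarith
      · simp only [if_true, Nat.succ_ne_zero, if_false]
        by_contra hc
        refine hx1 _ (singleton_mem_FareyExt k) ⟨?_, (not_le.1 hc).le⟩
        rw [betaL_singleton]
        push_cast at hx2
        linarith
    · obtain ⟨hp, hq⟩ := ne_of_christoffel_mem_FareySet hpq
      simp only [hp, hq, if_false]
      by_contra hc
      push Not at hc
      exact hx1 _ (hmem _ _ hpq) ⟨hc.1, hc.2⟩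

lemma hasPackingDimZero_Eexc : HasPackingDimZero Eexc := by
  refine ⟨fun n => excPiece n.unpair.1 (1 / ((n.unpair.2 : ℝ) + 1)), fun x hx => ?_,
    fun n => hasBoxDimZero_excPiece _ (by positivity)⟩
  have h1 : 1 < x := hx.1
  obtain ⟨j, hj⟩ := exists_nat_one_div_lt (sub_pos.2 h1)
  have hpos : 0 < ⌈x - 1⌉₊ := Nat.ceil_pos.2 (by linarith)
  obtain ⟨k, hk⟩ : ∃ k, ⌈x - 1⌉₊ = k + 1 := ⟨⌈x - 1⌉₊ - 1, by omega⟩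
  refine mem_iUnion.2 ⟨Nat.pair k j, hx, ?_, ?_, ?_⟩ <;> simp only [Nat.unpair_pair]
  · have : (k : ℝ) < x - 1 := Nat.lt_ceil.1 (by omega)
    linarith
  · have := Nat.le_ceil (x - 1)
    rw [hk] at this
    push_cast at this
    linarith
  · linarith

/-- Words of depth `m + 1` whose first factor uses at most `M` applications of `θ`. -/
def boundedLevel (M : ℕ) : ℕ → Set (List ℕ)
  | 0 => {w | ∃ v ∈ FareyHat, ∃ k ≤ M, w = theta^[k] v}
  | m + 1 => image2 subst (boundedLevel M m) FareySet

lemma isGood_of_mem_boundedLevel {M m : ℕ} {S : List ℕ} (hS : S ∈ boundedLevel M m) :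
    IsGood S := by
  induction m generalizing S with
  | zero =>
    obtain ⟨v, hv, k, _, rfl⟩ := hS
    exact isGood_of_mem_FareyExt ⟨v, hv, k, rfl⟩
  | succ m ih =>
    obtain ⟨S', hS', r, hr, rfl⟩ := hS
    exact (ih hS').subst (isBinGood_of_mem_FareySet hr)

lemma two_le_length_of_mem_FareySet {r : List ℕ} (hr : r ∈ FareySet) : 2 ≤ r.length := by
  obtain ⟨p, q, hp, hpq, _, rfl⟩ := exists_christoffel_of_mem_FareySet hr
  rw [length_christoffel]
  omega

lemma lt_length_of_mem_boundedLevel {M m : ℕ} {S : List ℕ} (hS : S ∈ boundedLevel M m) :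
    m < S.length := by
  induction m generalizing S with
  | zero => exact (isGood_of_mem_boundedLevel hS).ext.pos
  | succ m ih =>
    obtain ⟨S', hS', r, hr, rfl⟩ := hS
    rw [(isGood_of_mem_boundedLevel hS').length_subst (isBinGood_of_mem_FareySet hr)]
    have h1 := ih hS'
    have h2 := Nat.mul_le_mul_left S'.length (two_le_length_of_mem_FareySet hr)
    omega

lemma foldl_subst_mem_boundedLevel {M j : ℕ} {s : List ℕ} (hs : s ∈ boundedLevel M j)
    {rs : List (List ℕ)} (hrs : ∀ r ∈ rs, r ∈ FareySet) :
    rs.foldl subst s ∈ boundedLevel M (j + rs.length) := by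
  induction rs generalizing s j with
  | nil => exact hs
  | cons r rs ih =>
    have h := ih (j := j + 1) (s := subst s r) ⟨s, hs, r, hrs r (by simp), rfl⟩
      fun r' hr' => hrs r' (by simp [hr'])
    rwa [List.length_cons, add_comm rs.length, ← add_assoc]

lemma IsGood.le_max_foldl_subst {s : List ℕ} (h : IsGood s) {rs : List (List ℕ)}
    (hrs : ∀ r ∈ rs, r ∈ FareySet) :
    perZ (maxCyc s) 0 ≤ perZ (maxCyc (rs.foldl _root_.subst s)) 0 := by
  induction rs generalizing s with
  | nil => exact le_rfl
  | cons r rs ih =>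
    have hr := isBinGood_of_mem_FareySet (hrs r (by simp))
    exact (h.le_max_subst hr).trans (ih (h.subst hr) fun r' hr' => hrs r' (by simp [hr']))

lemma mem_boundedLevel {M m : ℕ} {S : List ℕ} (hS : S ∈ LambdaE (m + 1))
    (hM : perZ (maxCyc S) 0 ≤ M) : S ∈ boundedLevel M m := by
  obtain ⟨s, ⟨v, hv, k, rfl⟩, rs, hlen, hrs, rfl⟩ := hS
  obtain ⟨p, q, hp, hpq, hc, e⟩ := exists_christoffel_of_mem_FareyHat hv
  have hg : IsGood v := e ▸ isGood_christoffel hp hpq hc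
  have h1 := (hg.theta_iterate k).le_max_foldl_subst hrs
  rw [perZ_maxCyc_theta_iterate hg.ne_nil] at h1
  dsimp only at h1
  have h2 := perZ_nonneg (maxCyc v) 0
  have h3 : theta^[k] v ∈ boundedLevel M 0 := ⟨v, hv, k, by omega, rfl⟩
  have h4 := foldl_subst_mem_boundedLevel h3 hrs
  rwa [hlen, Nat.zero_add] at h4

/-- The weight of a word, the inverse fourth power of its length. -/
noncomputable def wordWeight (S : List ℕ) : ENNReal := ENNReal.ofReal (((S.length : ℝ) ^ 4)⁻¹)

lemma tsum_range_le_tsum {ι : Type*} (f : ι → List ℕ) (g : List ℕ → ENNReal) {A : Set (List ℕ)}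
    (hA : A ⊆ range f) : ∑' S : A, g S ≤ ∑' i, g (f i) :=
  (ENNReal.tsum_mono_subtype g hA).trans
    (ENNReal.tsum_le_tsum_comp_of_surjective (f := rangeFactorization f)
      rangeFactorization_surjective fun S : range f => g S)

lemma sum_range_farey_le (N : ℕ) :
    ∑ n ∈ Finset.range N, ((n : ℝ) + 1) * (((n : ℝ) + 2) ^ 4)⁻¹ ≤ 1 - ((N : ℝ) + 1)⁻¹ := by
  induction N with
  | zero => simp
  | succ N ih =>
    rw [Finset.sum_range_succ]
    have h : ((N : ℝ) + 1) * (((N : ℝ) + 2) ^ 4)⁻¹ ≤ ((N : ℝ) + 1)⁻¹ - ((N : ℝ) + 2)⁻¹ := by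
      have hN : (0 : ℝ) ≤ N := N.cast_nonneg
      have e : ((N : ℝ) + 1)⁻¹ - ((N : ℝ) + 2)⁻¹ = 1 / (((N : ℝ) + 1) * (N + 2)) := by
        field_simp
        ring
      rw [e, ← div_eq_mul_inv, div_le_div_iff₀ (by positivity) (by positivity)]
      nlinarith [pow_nonneg hN 2, pow_nonneg hN 3, pow_nonneg hN 4]
    push_cast
    rw [show (N : ℝ) + 1 + 1 = N + 2 by ring]
    linarith

lemma tsum_wordWeight_FareySet_le : ∑' r : FareySet, wordWeight r ≤ 1 := by
  have hsub : FareySet ⊆ range fun x : Σ n : ℕ, Fin (n + 1) =>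
      christoffel (x.2 + 1) (x.1 + 2) := by
    intro w hw
    obtain ⟨p, q, hp, hpq, _, rfl⟩ := exists_christoffel_of_mem_FareySet hw
    refine ⟨⟨q - 2, ⟨p - 1, by omega⟩⟩, ?_⟩
    dsimp only
    rw [Nat.sub_add_cancel hp, Nat.sub_add_cancel (by omega)]
  refine (tsum_range_le_tsum _ wordWeight hsub).trans ?_
  rw [ENNReal.tsum_sigma fun (n : ℕ) (i : Fin (n + 1)) =>
    wordWeight (christoffel (i + 1) (n + 2))]
  have e : ∀ n : ℕ, ∑' i : Fin (n + 1), wordWeight (christoffel (i + 1) (n + 2)) =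
      ENNReal.ofReal (((n : ℝ) + 1) * (((n : ℝ) + 2) ^ 4)⁻¹) := by
    intro n
    simp only [wordWeight, length_christoffel, tsum_fintype, Finset.sum_const, Finset.card_univ,
      Fintype.card_fin]
    rw [nsmul_eq_mul, ENNReal.ofReal_mul (by positivity), ← Nat.cast_succ, ENNReal.ofReal_natCast]
    push_cast
    rfl
  simp only [e]
  refine ENNReal.tsum_le_of_sum_range_le fun N => ?_
  rw [← ENNReal.ofReal_sum_of_nonneg fun i _ => by positivity]
  refine ENNReal.ofReal_le_one.2 ((sum_range_farey_le N).trans ?_)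
  have : 0 < ((N : ℝ) + 1)⁻¹ := by positivity
  linarith

lemma tsum_wordWeight_FareyHat_le : ∑' r : FareyHat, wordWeight r ≤ 2 := by
  refine (ENNReal.tsum_union_le wordWeight FareySet {[1]}).trans ?_
  rw [tsum_singleton ([1] : List ℕ) wordWeight, ← one_add_one_eq_two]
  refine add_le_add tsum_wordWeight_FareySet_le ?_
  simp [wordWeight]

lemma tsum_wordWeight_boundedLevel_le (M m : ℕ) :
    ∑' S : boundedLevel M m, wordWeight S ≤ (M + 1) * 2 := by
  induction m with
  | zero =>
    have hsub : boundedLevel M 0 ⊆ range fun x : Fin (M + 1) × FareyHat =>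
        theta^[(x.1 : ℕ)] (x.2 : List ℕ) := by
      rintro w ⟨v, hv, k, hk, rfl⟩
      exact ⟨(⟨k, by omega⟩, ⟨v, hv⟩), rfl⟩
    refine (tsum_range_le_tsum _ wordWeight hsub).trans ?_
    have e : ∀ (k : ℕ) (v : List ℕ), wordWeight (theta^[k] v) = wordWeight v := fun k v => by
      rw [wordWeight, length_theta_iterate, wordWeight]
    rw [ENNReal.tsum_prod (f := fun (k : Fin (M + 1)) (v : FareyHat) =>
      wordWeight (theta^[(k : ℕ)] (v : List ℕ)))]
    simp only [e, tsum_fintype, Finset.sum_const, Finset.card_univ, Fintype.card_fin,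
      nsmul_eq_mul]
    push_cast
    gcongr
    exact tsum_wordWeight_FareyHat_le
  | succ m ih =>
    have hsub : boundedLevel M (m + 1) ⊆ range fun x : boundedLevel M m × FareySet =>
        subst x.1 x.2 := by
      rintro w ⟨S, hS, r, hr, rfl⟩
      exact ⟨(⟨S, hS⟩, ⟨r, hr⟩), rfl⟩
    refine (tsum_range_le_tsum _ wordWeight hsub).trans ?_
    have e : ∀ (S : boundedLevel M m) (r : FareySet), wordWeight (subst S r) =
        wordWeight S * wordWeight r := fun S r => by
      rw [wordWeight, (isGood_of_mem_boundedLevel S.2).length_subst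
        (isBinGood_of_mem_FareySet r.2), wordWeight, wordWeight,
        ← ENNReal.ofReal_mul (by positivity)]
      push_cast
      rw [mul_pow, mul_inv]
    rw [ENNReal.tsum_prod (f := fun (S : boundedLevel M m) (r : FareySet) =>
      wordWeight (subst S r))]
    simp only [e, ENNReal.tsum_mul_left, ENNReal.tsum_mul_right]
    calc _ ≤ ((M : ENNReal) + 1) * 2 * 1 := mul_le_mul' ih tsum_wordWeight_FareySet_le
      _ = _ := mul_one _

lemma IsGood.agree_upZ {S : List ℕ} (h : IsGood S) {i : ℕ} (hi : i < S.length - 1) :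
    perZ (maxCyc S) i = upZ S i := by
  rw [upZ_apply h.ne_nil, if_pos (by omega), if_neg (by omega), add_zero]

lemma IsGood.max_le_betaL {S : List ℕ} (h : IsGood S) : (perZ (maxCyc S) 0 : ℝ) ≤ betaL S :=
  first_digit_le (D := (perZ (maxCyc S) 0 : ℝ)) h.betaL_spec.1 (perZ_nonneg _)
    (fun i => by exact_mod_cast h.perZ_max_le i) h.betaL_spec.2

lemma IsGood.betaR_sub_betaL_le {S : List ℕ} (h : IsGood S) {δ x : ℝ} {M : ℕ} (hδ : 0 < δ)
    (hx : x ∈ Jint S) (h1 : 1 + δ ≤ x) (hM : x ≤ M) : betaR S - betaL S ≤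
      ((M + 1 : ℝ) + 1) ^ 2 * ((M + 1) / δ) * ((1 + δ)⁻¹) ^ (S.length - 1) := by
  obtain ⟨hl, hr⟩ := hx
  have hdig : (perZ (maxCyc S) 0 : ℝ) ≤ M := h.max_le_betaL.trans (hl.trans hM)
  have hD : ∀ i, (perZ (maxCyc S) i : ℝ) ≤ M + 1 := fun i => by
    have : (perZ (maxCyc S) i : ℝ) ≤ perZ (maxCyc S) 0 := by exact_mod_cast h.perZ_max_le i
    linarith
  obtain ⟨hu0, huD⟩ := h.digit_bounds (isBin_const_one.consZ (d := 0) (Or.inl rfl))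
  rw [← h.upZ_eq] at hu0 huD
  exact base_gap_le hδ h.betaL_spec.1.le (h1.trans hr) (hl.trans hr) (perZ_nonneg _) hD hu0
    (fun i => (huD i).trans (by linarith)) h.one_le_max (fun i hi => h.agree_upZ hi)
    (summable_digits h.betaL_spec.1 (perZ_nonneg _) hD) h.betaL_spec.2 h.betaR_spec.2

lemma exists_rpow_le_inv_pow {K ν t : ℝ} (hK : 0 ≤ K) (hν0 : 0 < ν) (hν1 : ν < 1) (ht : 0 < t) :
    ∃ C : ℝ, 0 ≤ C ∧ ∀ n : ℕ, 1 ≤ n → (K * ν ^ (n - 1)) ^ t ≤ C * ((n : ℝ) ^ 4)⁻¹ := by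
  have hνt0 : 0 < ν ^ t := Real.rpow_pos_of_pos hν0 t
  have hνt1 : ν ^ t < 1 := Real.rpow_lt_one hν0.le hν1 ht
  obtain ⟨B, hB⟩ := (tendsto_pow_const_mul_const_pow_of_lt_one 4 hνt0.le hνt1).bddAbove_range
  have hB' : ∀ n : ℕ, (n : ℝ) ^ 4 * (ν ^ t) ^ n ≤ B := fun n => hB ⟨n, rfl⟩
  have hB0 : 0 ≤ B := by simpa using hB' 0
  refine ⟨K ^ t * (ν ^ t)⁻¹ * B, by positivity, fun n hn => ?_⟩
  have hn0 : (0 : ℝ) < n := by exact_mod_cast hn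
  obtain ⟨j, rfl⟩ := Nat.exists_eq_add_of_le' hn
  have hb := hB' (j + 1)
  rw [Nat.add_sub_cancel, Real.mul_rpow hK (by positivity), ← Real.rpow_natCast,
    ← Real.rpow_mul hν0.le, mul_comm (j : ℝ), Real.rpow_mul hν0.le, Real.rpow_natCast,
    ← div_eq_mul_inv, le_div_iff₀ (by positivity)]
  calc K ^ t * (ν ^ t) ^ j * ((j + 1 : ℕ) : ℝ) ^ 4
      = K ^ t * (ν ^ t)⁻¹ * (((j + 1 : ℕ) : ℝ) ^ 4 * (ν ^ t) ^ (j + 1)) := by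
        rw [pow_succ (ν ^ t) j]
        field_simp
    _ ≤ K ^ t * (ν ^ t)⁻¹ * B := by gcongr

/-- The part of the infinitely renormalizable set inside a compact interval of `(1, ∞)` has
Hausdorff dimension zero. -/
lemma dimH_Einf_inter_Icc {δ : ℝ} (hδ : 0 < δ) (M : ℕ) :
    dimH (Einf ∩ Icc (1 + δ) (M : ℝ)) = 0 := by
  refine le_antisymm (le_of_forall_gt_imp_ge_of_dense fun d hd => ?_) zero_le
  obtain ⟨t, ht0, htd⟩ := ENNReal.lt_iff_exists_nnreal_btwn.1 hd
  have ht : (0 : ℝ) < t := by exact_mod_cast ht0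
  refine (dimH_le_of_hausdorffMeasure_ne_top (d := t) ?_).trans htd.le
  set K : ℝ := ((M + 1 : ℝ) + 1) ^ 2 * ((M + 1) / δ) with hKdef
  set ν : ℝ := (1 + δ)⁻¹ with hνdef
  have hK : 0 ≤ K := by positivity
  have hν0 : 0 < ν := by positivity
  have hν1 : ν < 1 := inv_lt_one_of_one_lt₀ (by linarith)
  obtain ⟨C, hC0, hC⟩ := exists_rpow_le_inv_pow hK hν0 hν1 ht
  have hdiam : ∀ (m : ℕ) (S : boundedLevel M m),
      Metric.ediam (Jint S ∩ Icc (1 + δ) (M : ℝ)) ≤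
        ENNReal.ofReal (K * ν ^ ((S : List ℕ).length - 1)) := by
    intro m S
    rcases (Jint S ∩ Icc (1 + δ) (M : ℝ)).eq_empty_or_nonempty with h | ⟨x, hx, hx1, hx2⟩
    · rw [h, Metric.ediam_empty]
      exact zero_le
    · refine (Metric.ediam_mono inter_subset_left).trans ?_
      rw [Jint, Real.ediam_Icc]
      exact ENNReal.ofReal_le_ofReal
        ((isGood_of_mem_boundedLevel S.2).betaR_sub_betaL_le hδ hx hx1 hx2)
  have hbound := Measure.hausdorffMeasure_le_liminf_tsum (ι := fun m : ℕ => boundedLevel M m)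
    (l := atTop) (t : ℝ) (Einf ∩ Icc (1 + δ) (M : ℝ)) (fun m => ENNReal.ofReal (K * ν ^ m))
    (by
      rw [← ENNReal.ofReal_zero]
      refine ENNReal.tendsto_ofReal ?_
      simpa using (tendsto_pow_atTop_nhds_zero_of_lt_one hν0.le hν1).const_mul K)
    (fun m S => Jint S ∩ Icc (1 + δ) (M : ℝ))
    (Eventually.of_forall fun m S => (hdiam m S).trans (ENNReal.ofReal_le_ofReal (by
      have := lt_length_of_mem_boundedLevel S.2
      exact mul_le_mul_of_nonneg_left (pow_le_pow_of_le_one hν0.le hν1.le (by omega)) hK)))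
    (Eventually.of_forall fun m x hx => by
      obtain ⟨S, hS, hxS⟩ := mem_iUnion₂.1 (mem_iInter₂.1 hx.1 (m + 1) (by simp))
      have h1 : (perZ (maxCyc S) 0 : ℝ) ≤ M :=
        (isGood_of_mem_LambdaE hS).max_le_betaL.trans (hxS.1.trans hx.2.2)
      exact mem_iUnion.2 ⟨⟨S, mem_boundedLevel hS (by exact_mod_cast h1)⟩, hxS, hx.2⟩)
  refine ne_top_of_le_ne_top (b := ENNReal.ofReal C * ((M + 1) * 2)) ?_ (hbound.trans ?_)
  · exact ENNReal.mul_ne_top ENNReal.ofReal_ne_top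
      (ENNReal.mul_ne_top (by simp) (by simp))
  · refine (liminf_le_liminf (Eventually.of_forall fun m => ?_)).trans_eq (liminf_const _)
    calc ∑' S : boundedLevel M m, Metric.ediam (Jint S ∩ Icc (1 + δ) (M : ℝ)) ^ (t : ℝ)
        ≤ ∑' S : boundedLevel M m, ENNReal.ofReal C * wordWeight S := by
          refine ENNReal.tsum_le_tsum fun S => ?_
          refine (ENNReal.rpow_le_rpow (hdiam m S) ht.le).trans ?_
          rw [ENNReal.ofReal_rpow_of_nonneg (by positivity) ht.le, wordWeight,
            ← ENNReal.ofReal_mul hC0]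
          exact ENNReal.ofReal_le_ofReal (hC _ (isGood_of_mem_boundedLevel S.2).ext.pos)
      _ ≤ ENNReal.ofReal C * ((M + 1) * 2) := by
          rw [ENNReal.tsum_mul_left]
          exact mul_le_mul_right (tsum_wordWeight_boundedLevel_le M m) _

lemma dimH_Einf : dimH Einf = 0 := by
  refine le_antisymm ?_ zero_le
  have hsub : Einf ⊆ ⋃ j : ℕ, Einf ∩ Icc (1 + 1 / ((j : ℝ) + 1)) (j : ℝ) := by
    intro x hx
    obtain ⟨S, hS, hxS⟩ := mem_iUnion₂.1 (mem_iInter₂.1 hx 1 (by simp))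
    have h1 : 1 < x := (isGood_of_mem_LambdaE hS).betaL_spec.1.trans_le hxS.1
    obtain ⟨j, hj⟩ := exists_nat_one_div_lt (sub_pos.2 h1)
    obtain ⟨i, hi⟩ := exists_nat_ge x
    refine mem_iUnion.2 ⟨max i j, hx, ?_, hi.trans (by exact_mod_cast le_max_left i j)⟩
    have h2 : 1 / (((max i j : ℕ) : ℝ) + 1) ≤ 1 / ((j : ℝ) + 1) := by
      have : (j : ℝ) ≤ (max i j : ℕ) := by exact_mod_cast le_max_right i j
      gcongr
    linarith
  refine (dimH_mono hsub).trans ?_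
  rw [dimH_iUnion]
  exact iSup_le fun j => (dimH_Einf_inter_Icc (by positivity) j).le

/-- (i) The exceptional set `E` has packing dimension zero; (ii) each
relative exceptional set `E^S`, `S ∈ Λ_e`, has box-counting dimension zero; (iii) the
infinitely renormalizable set `E_∞` has Hausdorff dimension zero. -/
theorem exceptional_sets_zero_dimensional :
    HasPackingDimZero Eexc ∧
    (∀ S ∈ LambdaExt, HasBoxDimZero (EexcRel S)) ∧
    dimH Einf = 0 :=
  ⟨hasPackingDimZero_Eexc, fun S hS => by
    obtain ⟨m, _, h⟩ := mem_iUnion₂.1 hS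
    exact (isGood_of_mem_LambdaE h).hasBoxDimZero_EexcRel, dimH_Einf⟩
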